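/- arXiv:1205.2803 — 2 statements merged into one kernel-verified Lean document; each statement's English description precedes it below -/
import Mathlib

section
/- Let ħ > 0, let V : ℝ → ℝ be a Schwartz function, let x ∈ ℝ, and let f : ℝ → ℂ be a Schwartz function. Then the function v ↦ (Θ[V]f)(x,v) is integrable on ℝ and its zeroth moment vanishes: ∫_ℝ (Θ[V]f)(x,v) dv = 0. -/
open MeasureTheory Complex

/-- The one-dimensional nonlocal Wigner potential operator
`(Θ[V]f)(x,v) = (-i)/(2πℏ²) ∫ [V(x+y/2) - V(x-y/2)] e^{iyv/ℏ} (∫ f(w) e^{-iyw/ℏ} dw) dy`. -/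
noncomputable def wignerTheta (ℏ : ℝ) (V : ℝ → ℝ) (f : ℝ → ℂ) (x v : ℝ) : ℂ :=
  (-Complex.I) / (2 * Real.pi * ℏ ^ 2) *
    ∫ y : ℝ, ((V (x + y / 2) - V (x - y / 2) : ℝ) : ℂ) *
      Complex.exp (Complex.I * y * v / ℏ) *
      ∫ w : ℝ, f w * Complex.exp (-Complex.I * y * w / ℏ)

/-! In the velocity variable, `Θ[V]` is at each position `x` a constant multiple of the Fourier
multiplier whose symbol is a symmetric difference of `V` around `x`. The integral of a function
is its Fourier transform at frequency `0`, where this symbol vanishes. -/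

open FourierTransform SchwartzMap
open scoped Real

section FourierMultiplier

variable {E F : Type*} [NormedAddCommGroup E] [InnerProductSpace ℝ E] [FiniteDimensional ℝ E]
  [MeasurableSpace E] [BorelSpace E] [NormedAddCommGroup F] [NormedSpace ℂ F]

lemma fourier_apply_zero (f : E → F) : 𝓕 f 0 = ∫ v, f v := by
  simp [Real.fourier_eq]

lemma integral_fourierMultiplierCLM [CompleteSpace F] {𝕜 : Type*} [RCLike 𝕜] [NormedSpace 𝕜 F]
    [SMulCommClass ℂ 𝕜 F] {g : E → 𝕜} (hg : g.HasTemperateGrowth) (f : 𝓢(E, F)) :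
    ∫ v, fourierMultiplierCLM F g f v = g 0 • ∫ v, f v := by
  rw [← fourier_apply_zero, ← fourier_coe, fourierMultiplierCLM_apply, fourier_fourierInv_eq,
    smulLeftCLM_apply_apply hg, fourier_coe, fourier_apply_zero]

end FourierMultiplier

section Wigner

variable {ℏ : ℝ} {V : ℝ → ℝ}

/-- The symbol of `Θ[V]` at position `x`, up to a constant factor, as a Fourier multiplier in
the velocity. The frequency `t` is dual to the velocity `v` through the phase `e^{2πitv}` of
Mathlib's Fourier transform, so it is related to the variable `y` in `wignerTheta` by
`y = 2πℏt`. -/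
noncomputable def wignerSymbol (ℏ : ℝ) (V : ℝ → ℝ) (x t : ℝ) : ℝ :=
  V (x + π * ℏ * t) - V (x - π * ℏ * t)

lemma wignerSymbol_zero (ℏ : ℝ) (V : ℝ → ℝ) (x : ℝ) : wignerSymbol ℏ V x 0 = 0 := by
  simp [wignerSymbol]

lemma hasTemperateGrowth_wignerSymbol (ℏ : ℝ) (hV : V.HasTemperateGrowth) (x : ℝ) :
    (wignerSymbol ℏ V x).HasTemperateGrowth :=
  (hV.comp (f := fun t ↦ x + π * ℏ * t) (by fun_prop)).sub
    (hV.comp (f := fun t ↦ x - π * ℏ * t) (by fun_prop))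

lemma integral_mul_exp_eq_fourier (ℏ : ℝ) (f : ℝ → ℂ) (y : ℝ) :
    ∫ w : ℝ, f w * exp (-I * y * w / ℏ) = 𝓕 f (y / (2 * π * ℏ)) := by
  rw [Real.fourier_eq']
  congr 1 with w
  have phase : -I * y * w / ℏ = ↑(-2 * π * inner ℝ w (y / (2 * π * ℏ))) * I := by
    simp only [neg_mul, RCLike.inner_apply, Real.ringHom_apply, ofReal_neg, ofReal_mul,
      ofReal_ofNat, ofReal_div]
    field_simp
  rw [phase, smul_eq_mul, mul_comm]

lemma integral_wignerTheta_integrand (hℏ : ℏ ≠ 0) (V : ℝ → ℝ) (f : ℝ → ℂ) (x v : ℝ) :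
    ∫ y : ℝ, ((V (x + y / 2) - V (x - y / 2) : ℝ) : ℂ) * exp (I * y * v / ℏ) *
        ∫ w : ℝ, f w * exp (-I * y * w / ℏ) =
      |2 * π * ℏ| • 𝓕⁻ (fun t ↦ wignerSymbol ℏ V x t • 𝓕 f t) v := by
  rw [Real.fourierInv_eq', ← Measure.integral_comp_div]
  congr 1 with y
  have shift : π * ℏ * (y / (2 * π * ℏ)) = y / 2 := by field_simp
  have phase : I * y * v / ℏ = ↑(2 * π * inner ℝ (y / (2 * π * ℏ)) v) * I := by
    simp only [RCLike.inner_apply, map_div₀, Real.ringHom_apply, ofReal_mul, ofReal_ofNat,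
      ofReal_div]
    field_simp
  rw [integral_mul_exp_eq_fourier, wignerSymbol, shift, phase, real_smul, smul_eq_mul]
  ring

lemma wignerTheta_eq_fourierInv (hℏ : ℏ ≠ 0) (V : ℝ → ℝ) (f : ℝ → ℂ) (x v : ℝ) :
    wignerTheta ℏ V f x v =
      -I * |ℏ| / ℏ ^ 2 * 𝓕⁻ (fun t ↦ wignerSymbol ℏ V x t • 𝓕 f t) v := by
  rw [wignerTheta, integral_wignerTheta_integrand hℏ, abs_mul, abs_of_pos Real.two_pi_pos,
    real_smul]
  push_cast
  field_simp

lemma wignerTheta_eq_fourierMultiplierCLM (hℏ : ℏ ≠ 0) (hV : V.HasTemperateGrowth)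
    (f : 𝓢(ℝ, ℂ)) (x v : ℝ) :
    wignerTheta ℏ V f x v =
      -I * |ℏ| / ℏ ^ 2 * fourierMultiplierCLM ℂ (wignerSymbol ℏ V x) f v := by
  rw [wignerTheta_eq_fourierInv hℏ, fourierMultiplierCLM_apply, fourierInv_coe,
    smulLeftCLM_apply (hasTemperateGrowth_wignerSymbol ℏ hV x), fourier_coe]

end Wigner

theorem wignerTheta_zeroth_moment_general {ℏ : ℝ} (hℏ : ℏ ≠ 0) {V : ℝ → ℝ}
    (hV : V.HasTemperateGrowth) (x : ℝ) (f : 𝓢(ℝ, ℂ)) :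
    Integrable (fun v ↦ wignerTheta ℏ V f x v) ∧ ∫ v, wignerTheta ℏ V f x v = 0 := by
  simp only [wignerTheta_eq_fourierMultiplierCLM hℏ hV]
  refine ⟨(SchwartzMap.integrable _).const_mul _, ?_⟩
  rw [integral_const_mul, integral_fourierMultiplierCLM (hasTemperateGrowth_wignerSymbol ℏ hV x),
    wignerSymbol_zero, zero_smul, mul_zero]

/-- For a Schwartz potential `V` and a Schwartz function `f`, the function
`v ↦ (Θ[V]f)(x,v)` is integrable on `ℝ` and its zeroth moment vanishes. -/
theorem wignerTheta_zeroth_moment (ℏ : ℝ) (hℏ : 0 < ℏ) (V : SchwartzMap ℝ ℝ) (x : ℝ)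
    (f : SchwartzMap ℝ ℂ) :
    Integrable (fun v : ℝ => wignerTheta ℏ (⇑V) (⇑f) x v) ∧
    (∫ v : ℝ, wignerTheta ℏ (⇑V) (⇑f) x v) = 0 :=
  wignerTheta_zeroth_moment_general hℏ.ne' V.hasTemperateGrowth x f
end

section
/- Momentum balance for the 1D Wigner–BGK equation: let ħ > 0, τ > 0, let V : ℝ → ℝ be a Schwartz function, and let t ↦ f(t) be a continuously differentiable curve in the Schwartz space S(ℝ^2) of real-valued functions of (x,v), such that for all t, x, v: ∂f/∂t + v ∂f/∂x + (Θ[V] f(t,x,·))(v) = (f_eq - f)/τ, where ρ(t,x) = ∫_ℝ f(t,x,v) dv > 0, ρ u = ∫_ℝ v f dv, ρ T = ∫_ℝ (v-u)^2 f dv with T(t,x) > 0, and f_eq(t,x,v) = ρ (2π T)^{-1/2} exp(-(v-u)^2/(2T)). Then d/dt ∫_ℝ ∫_ℝ v f(t,x,v) dx dv = - ∫_ℝ ρ(t,x) V'(x) dx. -/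
open MeasureTheory Complex

/-!
Multiplying the equation by `v` and integrating over phase space, transport contributes nothing,
since its flow `(x, v) ↦ (x + t v, v)` preserves both volume and `v`; relaxation contributes
nothing, since `f` and the Maxwellian share their momentum; and `Θ[V]` contributes `ρ V'`, since it
is convolution in velocity with a rescaled Fourier transform of `y ↦ V (x + y / 2) - V (x - y / 2)`,
whose moments of order `0` and `1` are the value `0` and the derivative `V'(x)` at `y = 0`.

The difficulty is to exchange the time derivative with the integral, as pointwise differentiability
in `t` gives no bound that is uniform in `t`. The equation does bound the source
`F = ∂ₜ f + v ∂ₓ f` by `f` itself, uniformly in `t`, in the norm of `L¹((1 + v²) dx dv)`. By Baire's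
theorem, every nonempty closed set of times contains a relatively open portion on which `‖f(t)‖` and
the second differences of `f(t)` along the flow are bounded. On such a portion the fundamental
theorem of calculus along characteristics yields Duhamel's formula, so that the exceptional set of
times is empty. Duhamel's formula then holds at all times and makes `f` continuous in `L¹`.
-/

namespace WignerBGK
open Set Filter Topology Function
open scoped ENNReal NNReal

section ClosedSetFTC
variable {B : Set ℝ} {a b c d t : ℝ} {g h : ℝ → ℝ}

/-- The open interval between `c` and `d` is a bounded connected component of the complement
of `B`. -/
structure IsGap (B : Set ℝ) (c d : ℝ) : Prop where
  left_mem : c ∈ B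
  right_mem : d ∈ B
  lt : c < d
  disjoint : Disjoint (Ioo c d) B

theorem IsGap.right_le (hgap : IsGap B c d) (ht : t ∈ B) (hct : c < t) : d ≤ t :=
  not_lt.1 fun htd => disjoint_left.1 hgap.disjoint ⟨hct, htd⟩ ht

theorem IsGap.le_left (hgap : IsGap B c d) (ht : t ∈ B) (htd : t < d) : t ≤ c :=
  not_lt.1 fun hct => disjoint_left.1 hgap.disjoint ⟨hct, htd⟩ ht

theorem countable_setOf_isGap (B : Set ℝ) : {p : ℝ × ℝ | IsGap B p.1 p.2}.Countable := by
  refine Set.PairwiseDisjoint.countable_of_isOpen (s := fun p : ℝ × ℝ => Ioo p.1 p.2) ?_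
    (fun _ _ => isOpen_Ioo) fun _ hp => nonempty_Ioo.2 hp.lt
  rintro p hp q hq hne
  refine disjoint_left.2 fun x hx hx' => hne (Prod.ext ?_ ?_)
  · exact le_antisymm (hq.le_left hp.left_mem (hx.1.trans hx'.2))
      (hp.le_left hq.left_mem (hx'.1.trans hx.2))
  · exact le_antisymm (hp.right_le hq.right_mem (hx.1.trans hx'.2))
      (hq.right_le hp.right_mem (hx'.1.trans hx.2))

theorem frequently_mem_nhdsGT_or_exists_isGap (hB : IsClosed B) (ht : t ∈ B) (hb : b ∈ B)
    (htb : t < b) : (∃ᶠ u in 𝓝[>] t, u ∈ B) ∨ ∃ d, IsGap B t d := by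
  rw [or_iff_not_imp_left, not_frequently]
  intro hfree
  obtain ⟨c, htc, hc⟩ := mem_nhdsGT_iff_exists_Ioo_subset.1 hfree
  have hcb : c ≤ b := not_lt.1 fun hbc => hc ⟨htb, hbc⟩ hb
  have hbdd : BddBelow (B ∩ Ici c) := ⟨c, fun _ hx => hx.2⟩
  have hd := (hB.inter isClosed_Ici).csInf_mem ⟨b, hb, hcb⟩ hbdd
  refine ⟨sInf (B ∩ Ici c), ht, hd.1, lt_of_lt_of_le htc hd.2, disjoint_left.2 fun x hx hxB => ?_⟩
  exact hc ⟨hx.1, not_le.1 fun hcx => (csInf_le hbdd ⟨hxB, hcx⟩).not_gt hx.2⟩ hxB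

theorem eventually_mul_le_integral_nhdsGT {p : ℝ → ℝ} {U : Set ℝ} {y : ℝ} (ht : t ∈ Ico a b)
    (hp : IntegrableOn p (Icc a b)) (hU : U ∈ 𝓝 t)
    (hle : ∀ᵐ x ∂volume.restrict (Icc a b), x ∈ U → y ≤ p x) :
    ∀ᶠ u in 𝓝[>] t, (u - t) * y ≤ ∫ x in t..u, p x := by
  have hsmall : ∀ᶠ u in 𝓝[>] t, Icc t u ⊆ U :=
    ((tendsto_const_nhds (x := t)).Icc (tendsto_id.mono_left nhdsWithin_le_nhds)).eventually
      (eventually_smallSets.2 ⟨U, hU, fun _ hV => hV⟩)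
  filter_upwards [hsmall, Ioo_mem_nhdsGT ht.2] with u huU hu
  have hsub : Icc t u ⊆ Icc a b := Icc_subset_Icc ht.1 hu.2.le
  have hpu : IntervalIntegrable p volume t u :=
    (intervalIntegrable_iff_integrableOn_Icc_of_le hu.1.le).2 (hp.mono_set hsub)
  calc (u - t) * y = ∫ _ in t..u, y := by simp
    _ ≤ ∫ x in t..u, p x := by
      refine intervalIntegral.integral_mono_ae_restrict hu.1.le (by simp) hpu ?_
      filter_upwards [ae_restrict_of_ae_restrict_of_subset hsub hle,
        ae_restrict_mem measurableSet_Icc] with x hx hxu using hx (huU hxu)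

theorem exists_integral_majorant (hab : a ≤ b) (hh : IntegrableOn h (Icc a b)) {ε : ℝ}
    (hε : 0 < ε) :
    ∃ p : ℝ → ℝ, IntegrableOn p (Icc a b) ∧ (∀ᵐ x ∂volume.restrict (Icc a b), h x ≤ p x) ∧
      (∀ t ∈ Ico a b, ∃ y, h t < y ∧ ∀ᶠ u in 𝓝[>] t, (u - t) * y ≤ ∫ x in t..u, p x) ∧
      ∫ x in a..b, p x ≤ (∫ x in a..b, h x) + ε := by
  obtain ⟨G, hlt, hlsc, hint, htop, hG⟩ := exists_lt_lowerSemicontinuous_integral_lt h hh hε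
  have hreal : ∀ᵐ x ∂volume.restrict (Icc a b), ∀ y : ℝ, y < G x → y ≤ (G x).toReal := by
    filter_upwards [htop] with x hx y hy
    exact EReal.coe_le_coe_iff.1 (hy.le.trans_eq (EReal.coe_toReal hx.ne hy.ne_bot).symm)
  refine ⟨fun x => (G x).toReal, hint, hreal.mono fun x hx => hx _ (hlt x), fun t ht => ?_, ?_⟩
  · obtain ⟨y, hty, hyG⟩ := EReal.lt_iff_exists_real_btwn.1 (hlt t)
    exact ⟨y, EReal.coe_lt_coe_iff.1 hty, eventually_mul_le_integral_nhdsGT ht hint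
      (hlsc.lowerSemicontinuousAt _ _ hyG) (hreal.mono fun x hx hxy => hx y hxy)⟩
  · rw [integral_Icc_eq_integral_Ioc, ← intervalIntegral.integral_of_le hab,
      integral_Icc_eq_integral_Ioc, ← intervalIntegral.integral_of_le hab] at hG
    exact hG.le

theorem eventually_sub_le_mul_of_hasDerivWithinAt {g' y : ℝ} (hg : HasDerivWithinAt g g' B t)
    (hy : g' < y) : ∀ᶠ u in 𝓝[>] t, u ∈ B → g u - g t ≤ (u - t) * y := by
  have hslope := (hg.mono inter_subset_right).limsup_slope_le' (s := Ioi t ∩ B)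
    (fun ht => lt_irrefl t ht.1) hy
  rw [nhdsWithin_inter', eventually_inf_principal] at hslope
  filter_upwards [hslope, self_mem_nhdsWithin] with u hu htu huB
  calc g u - g t = (u - t) * slope g t u := (sub_smul_slope g t u).symm
    _ ≤ (u - t) * y := mul_le_mul_of_nonneg_left (hu huB).le (sub_nonneg.2 (le_of_lt htu))

theorem intervalIntegrable_of_integrableOn_Icc {p : ℝ → ℝ} (hp : IntegrableOn p (Icc a b))
    (hc : c ∈ Icc a b) (hd : d ∈ Icc a b) : IntervalIntegrable p volume c d :=
  intervalIntegrable_iff.2 (hp.mono_set (uIoc_subset_uIcc.trans (uIcc_subset_Icc hc hd)))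

theorem exists_gt_sub_le_integral {p : ℝ → ℝ} (hB : IsClosed B) (hBab : B ⊆ Icc a b) (hb : b ∈ B)
    (hh : IntegrableOn h (Icc a b)) (hp : IntegrableOn p (Icc a b))
    (hhp : ∀ᵐ x ∂volume.restrict (Icc a b), h x ≤ p x)
    (hgap : ∀ c d, IsGap B c d → g d - g c ≤ ∫ r in c..d, h r) (ht : t ∈ B) (htb : t < b)
    (hder : HasDerivWithinAt g (h t) B t)
    (hpt : ∃ y, h t < y ∧ ∀ᶠ u in 𝓝[>] t, (u - t) * y ≤ ∫ x in t..u, p x) :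
    ∃ u ∈ B, t < u ∧ g u - g t ≤ ∫ x in t..u, p x := by
  rcases frequently_mem_nhdsGT_or_exists_isGap hB ht hb htb with hacc | ⟨d, hd⟩
  · obtain ⟨y, hty, hy⟩ := hpt
    obtain ⟨u, huB, hyu, hgu, htu⟩ := (hacc.and_eventually (hy.and
      ((eventually_sub_le_mul_of_hasDerivWithinAt hder hty).and self_mem_nhdsWithin))).exists
    exact ⟨u, huB, htu, (hgu huB).trans hyu⟩
  · have htI := hBab ht
    have hdI := hBab hd.right_mem
    refine ⟨d, hd.right_mem, hd.lt, (hgap t d hd).trans ?_⟩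
    exact intervalIntegral.integral_mono_ae_restrict hd.lt.le
      (intervalIntegrable_of_integrableOn_Icc hh htI hdI)
      (intervalIntegrable_of_integrableOn_Icc hp htI hdI)
      (ae_restrict_of_ae_restrict_of_subset (Icc_subset_Icc htI.1 hdI.2) hhp)

theorem sub_le_integral_of_isGap (hB : IsClosed B) (hBab : B ⊆ Icc a b) (ha : a ∈ B) (hb : b ∈ B)
    (hh : IntegrableOn h (Icc a b)) (hder : ∀ c ∈ B, HasDerivWithinAt g (h c) B c)
    (hgap : ∀ c d, IsGap B c d → g d - g c ≤ ∫ r in c..d, h r) :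
    g b - g a ≤ ∫ r in a..b, h r := by
  have hab : a ≤ b := (hBab ha).2
  refine le_of_forall_pos_le_add fun ε hε => ?_
  obtain ⟨p, hp, hhp, hpt, hpε⟩ := exists_integral_majorant hab hh hε
  suffices hbs : b ∈ {t ∈ B | g t - g a ≤ ∫ x in a..t, p x} from hbs.2.trans hpε
  refine IsClosed.mem_of_ge_of_forall_exists_gt ?_ ⟨ha, by simp⟩ hab ?_
  · have hg : ContinuousOn g B := fun c hc => (hder c hc).continuousWithinAt
    have hP : ContinuousOn (fun t => ∫ x in a..t, p x) B := by
      have := intervalIntegral.continuousOn_primitive_interval (μ := volume) (f := p)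
        (by rwa [uIcc_of_le hab])
      exact (uIcc_of_le hab ▸ this).mono hBab
    exact (hB.isClosed_le (hg.sub continuousOn_const) hP).inter isClosed_Icc
  · rintro t ⟨⟨ht, hgt⟩, htab⟩
    obtain ⟨u, hu, htu, hgu⟩ := exists_gt_sub_le_integral hB hBab hb hh hp hhp hgap ht htab.2
      (hder t ht) (hpt t htab)
    refine ⟨u, ⟨hu, ?_⟩, htu, (hBab hu).2⟩
    rw [← intervalIntegral.integral_add_adjacent_intervals
      (intervalIntegrable_of_integrableOn_Icc hp (hBab ha) (hBab ht))
      (intervalIntegrable_of_integrableOn_Icc hp (hBab ht) (hBab hu))]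
    linarith

theorem sub_eq_integral_of_isGap (hB : IsClosed B) (hBab : B ⊆ Icc a b) (ha : a ∈ B) (hb : b ∈ B)
    (hh : IntegrableOn h (Icc a b)) (hder : ∀ c ∈ B, HasDerivWithinAt g (h c) B c)
    (hgap : ∀ c d, IsGap B c d → g d - g c = ∫ r in c..d, h r) :
    g b - g a = ∫ r in a..b, h r := by
  refine le_antisymm
    (sub_le_integral_of_isGap hB hBab ha hb hh hder fun c d hcd => (hgap c d hcd).le) ?_
  have hneg := sub_le_integral_of_isGap (g := -g) (h := -h) hB hBab ha hb hh.neg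
    (fun c hc => (hder c hc).neg) fun c d hcd => by
      simp only [Pi.neg_apply, intervalIntegral.integral_neg, ← hgap c d hcd]; linarith
  simp only [Pi.neg_apply, intervalIntegral.integral_neg] at hneg
  linarith

end ClosedSetFTC

section AlongFlow
variable {Z : Type*} [TopologicalSpace Z]

/-- The pull-back `t ↦ f(t) ∘ Φ_t` of a time-dependent function along a flow, i.e. `f` read in
Lagrangian coordinates. -/
def lagrangian (Φ : Flow ℝ Z) (f : ℝ → Z → ℝ) (t : ℝ) (z : Z) : ℝ := f t (Φ t z)

/-- A quantitative form of `C^{1,1}` regularity of `φ` along the orbits of `Φ`: the difference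
quotients at increments `h` and `k` differ by at most `N (|h| + |k|)`. Clearing denominators turns
this into a closed condition on `φ` for pointwise convergence, which the category argument needs. -/
def SecondDifferenceBound (Φ : Flow ℝ Z) (N : ℝ) (φ : Z → ℝ) : Prop :=
  ∀ z h k, |k * (φ (Φ h z) - φ z) - h * (φ (Φ k z) - φ z)| ≤ N * (|h| * |k| * (|h| + |k|))

/-- The derivative of `φ` at `z` along the orbit of `Φ`. -/
noncomputable def flowDeriv (Φ : Flow ℝ Z) (φ : Z → ℝ) (z : Z) : ℝ := deriv (fun s => φ (Φ s z)) 0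

variable {Φ : Flow ℝ Z} {N : ℝ} {φ : Z → ℝ} {z : Z}

theorem tendsto_flow_slope (hφ : DifferentiableAt ℝ (fun s => φ (Φ s z)) 0) :
    Tendsto (fun k => k⁻¹ * (φ (Φ k z) - φ z)) (𝓝[≠] 0) (𝓝 (flowDeriv Φ φ z)) := by
  simpa [flowDeriv] using hφ.hasDerivAt.tendsto_slope_zero

theorem SecondDifferenceBound.abs_sub_mul_flowDeriv_le (hN : SecondDifferenceBound Φ N φ)
    (hφ : DifferentiableAt ℝ (fun s => φ (Φ s z)) 0) (h : ℝ) :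
    |φ (Φ h z) - φ z - h * flowDeriv Φ φ z| ≤ N * (|h| * |h|) := by
  have hleft := ((tendsto_flow_slope hφ).const_mul h).const_sub (φ (Φ h z) - φ z) |>.abs
  have hright : Tendsto (fun k : ℝ => N * (|h| * (|h| + |k|))) (𝓝[≠] 0) (𝓝 (N * (|h| * |h|))) := by
    have hcont : Continuous fun k : ℝ => N * (|h| * (|h| + |k|)) := by fun_prop
    simpa using (hcont.tendsto 0).mono_left nhdsWithin_le_nhds
  refine le_of_tendsto_of_tendsto hleft hright ?_
  filter_upwards [self_mem_nhdsWithin] with k (hk : k ≠ 0)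
  refine le_of_mul_le_mul_left ?_ (abs_pos.2 hk)
  calc |k| * |φ (Φ h z) - φ z - h * (k⁻¹ * (φ (Φ k z) - φ z))|
      = |k * (φ (Φ h z) - φ z) - h * (φ (Φ k z) - φ z)| := by
        rw [← abs_mul]; congr 1; field_simp
    _ ≤ N * (|h| * |k| * (|h| + |k|)) := hN z h k
    _ = |k| * (N * (|h| * (|h| + |k|))) := by ring

theorem SecondDifferenceBound.mono {M : ℝ} (hN : SecondDifferenceBound Φ N φ) (hNM : N ≤ M) :
    SecondDifferenceBound Φ M φ := fun z h k => (hN z h k).trans (by gcongr)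

theorem isClosed_setOf_secondDifferenceBound {f : ℝ → Z → ℝ}
    (hf : ∀ z, Continuous fun t => f t z) (N : ℝ) :
    IsClosed {t | SecondDifferenceBound Φ N (f t)} := by
  simp only [SecondDifferenceBound, ofPred_forall]
  have hdiff (z : Z) (h k : ℝ) : Continuous fun t => k * (f t (Φ h z) - f t z) :=
    ((hf (Φ h z)).sub (hf z)).const_mul k
  exact isClosed_iInter fun z => isClosed_iInter fun h => isClosed_iInter fun k =>
    isClosed_le ((hdiff z h k).sub (hdiff z k h)).abs continuous_const

section ClosedSetDerivative
variable {A : Set ℝ} {a : ℝ} {f : ℝ → Z → ℝ}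

theorem continuousWithinAt_flowDeriv (hf : ∀ z, Continuous fun t => f t z)
    (hflow : ∀ t, DifferentiableAt ℝ (fun s => f t (Φ s z)) 0)
    (hA : ∀ t ∈ A, SecondDifferenceBound Φ N (f t)) (ha : a ∈ A) :
    ContinuousWithinAt (fun t => flowDeriv Φ (f t) z) A a := by
  rw [Metric.continuousWithinAt_iff']
  intro ε hε
  obtain ⟨k, hk, hk0⟩ : ∃ k : ℝ, |N| * |k| < ε / 3 ∧ k ≠ 0 := by
    have hcont : Continuous fun k : ℝ => |N| * |k| := by fun_prop
    have h0 := (hcont.tendsto 0).mono_left (nhdsWithin_le_nhds (s := {0}ᶜ))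
    simp only [abs_zero, mul_zero] at h0
    exact ((h0.eventually_lt_const (show 0 < ε / 3 by positivity)).and self_mem_nhdsWithin).exists
  let slope t := k⁻¹ * (f t (Φ k z) - f t z)
  have hslope : ∀ t ∈ A, |slope t - flowDeriv Φ (f t) z| < ε / 3 := by
    intro t ht
    refine lt_of_mul_lt_mul_left ?_ (abs_nonneg k)
    calc |k| * |slope t - flowDeriv Φ (f t) z|
        = |f t (Φ k z) - f t z - k * flowDeriv Φ (f t) z| := by
          rw [← abs_mul, mul_sub, mul_inv_cancel_left₀ hk0]
      _ ≤ N * (|k| * |k|) := (hA t ht).abs_sub_mul_flowDeriv_le (hflow t) k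
      _ ≤ |N| * (|k| * |k|) := by gcongr; exact le_abs_self N
      _ = |k| * (|N| * |k|) := by ring
      _ < |k| * (ε / 3) := by gcongr
  have hcont : Continuous slope := ((hf _).sub (hf _)).const_mul _
  have hnear := Metric.tendsto_nhds.1 (hcont.tendsto a) (ε / 3) (by positivity)
  filter_upwards [nhdsWithin_le_nhds hnear, self_mem_nhdsWithin] with t ht htA
  rw [Real.dist_eq] at ht ⊢
  have hat := hslope a ha
  have htt := hslope t htA
  rw [abs_lt] at *
  constructor <;> linarith [ht.1, ht.2, hat.1, hat.2, htt.1, htt.2]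

theorem hasDerivWithinAt_flow_increment (hf : ∀ z, Continuous fun t => f t z)
    (hflow : ∀ t, DifferentiableAt ℝ (fun s => f t (Φ s z)) 0)
    (hA : ∀ t ∈ A, SecondDifferenceBound Φ N (f t)) (ha : a ∈ A) :
    HasDerivWithinAt (fun t => f t (Φ (t - a) z) - f t z) (flowDeriv Φ (f a) z) A a := by
  have hβ := (continuousWithinAt_flowDeriv hf hflow hA ha).mono (sdiff_subset (t := {a}))
  rw [hasDerivWithinAt_iff_tendsto_slope]
  suffices hdiff : Tendsto (fun t => slope (fun t => f t (Φ (t - a) z) - f t z) a t -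
      flowDeriv Φ (f t) z) (𝓝[A \ {a}] a) (𝓝 0) by
    simpa using hdiff.add hβ
  have hzero : Tendsto (fun t => N * |t - a|) (𝓝[A \ {a}] a) (𝓝 0) := by
    have hcont : Continuous fun t => N * |t - a| := by fun_prop
    simpa using (hcont.tendsto a).mono_left nhdsWithin_le_nhds
  refine squeeze_zero_norm' ?_ hzero
  filter_upwards [self_mem_nhdsWithin] with t ⟨htA, hta⟩
  have hpos : 0 < |t - a| := abs_pos.2 (sub_ne_zero.2 hta)
  refine le_of_mul_le_mul_left ?_ hpos
  calc |t - a| * ‖slope (fun t => f t (Φ (t - a) z) - f t z) a t - flowDeriv Φ (f t) z‖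
      = |f t (Φ (t - a) z) - f t z - (t - a) * flowDeriv Φ (f t) z| := by
        rw [Real.norm_eq_abs, ← abs_mul, mul_sub]
        congr 2
        have := sub_smul_slope (fun t => f t (Φ (t - a) z) - f t z) a t
        simpa using this
    _ ≤ N * (|t - a| * |t - a|) := (hA t htA).abs_sub_mul_flowDeriv_le (hflow t) _
    _ = |t - a| * (N * |t - a|) := by ring

theorem hasDerivWithinAt_lagrangian (hf : ∀ z, Differentiable ℝ fun t => f t z)
    (hflow : ∀ t z, DifferentiableAt ℝ (fun s => f t (Φ s z)) 0)
    (hA : ∀ t ∈ A, SecondDifferenceBound Φ N (f t)) (ha : a ∈ A) (z : Z) :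
    HasDerivWithinAt (fun t => lagrangian Φ f t z)
      (deriv (fun t => f t (Φ a z)) a + flowDeriv Φ (f a) (Φ a z)) A a := by
  have hinc := hasDerivWithinAt_flow_increment (z := Φ a z) (fun z => (hf z).continuous)
    (fun t => hflow t _) hA ha
  have htime := ((hf (Φ a z)) a).hasDerivAt.hasDerivWithinAt (s := A)
  refine (htime.add hinc).congr_of_eventuallyEq_of_mem (.of_forall fun t => ?_) ha
  simp [lagrangian, ← Φ.map_add]

end ClosedSetDerivative
end AlongFlow

section Transport
variable {Z : Type*} [TopologicalSpace Z] [MeasurableSpace Z] {μ : Measure Z}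

/-- A pointwise solution of the transport equation `∂_t f + (derivative of f along Φ) = F` whose
source is controlled by the solution in `L¹(μ)`. -/
structure TransportSolution (Φ : Flow ℝ Z) (μ : Measure Z) (C : ℝ≥0) (f F : ℝ → Z → ℝ) :
    Prop where
  measurePreserving : ∀ t, MeasurePreserving (Φ t) μ μ
  measurable : ∀ t, Measurable (f t)
  integrable : ∀ t, Integrable (f t) μ
  differentiable : ∀ z, Differentiable ℝ fun t => f t z
  differentiableAt_flow : ∀ t z, DifferentiableAt ℝ (fun s => f t (Φ s z)) 0
  source_eq : ∀ t z, F t z = deriv (fun s => f s z) t + flowDeriv Φ (f t) z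
  exists_secondDifferenceBound : ∀ t, ∃ N : ℕ, SecondDifferenceBound Φ N (f t)
  eLpNorm_source_le : ∀ t, eLpNorm (F t) 1 μ ≤ C * eLpNorm (f t) 1 μ

/-- Duhamel's formula between the times `s` and `t`, almost everywhere along the flow. -/
def DuhamelIdentity (Φ : Flow ℝ Z) (μ : Measure Z) (f F : ℝ → Z → ℝ) (s t : ℝ) : Prop :=
  ∀ᵐ z ∂μ, lagrangian Φ f t z - lagrangian Φ f s z = ∫ r in s..t, lagrangian Φ F r z

/-- `f` is a mild solution on `[a, b]`: it is bounded in `L¹(μ)` and satisfies Duhamel's formula. -/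
structure IsMildOn (Φ : Flow ℝ Z) (μ : Measure Z) (f F : ℝ → Z → ℝ) (a b : ℝ) : Prop where
  exists_eLpNorm_le : ∃ N : ℝ≥0, ∀ t ∈ Icc a b, eLpNorm (f t) 1 μ ≤ N
  duhamel : ∀ s ∈ Icc a b, ∀ t ∈ Icc a b, DuhamelIdentity Φ μ f F s t

variable {Φ : Flow ℝ Z} {f F : ℝ → Z → ℝ} {C N : ℝ≥0} {a b c s t u : ℝ}

theorem IsMildOn.mono (hab : IsMildOn Φ μ f F a b) (hsub : Icc s t ⊆ Icc a b) :
    IsMildOn Φ μ f F s t := by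
  obtain ⟨N, hN⟩ := hab.exists_eLpNorm_le
  exact ⟨⟨N, fun r hr => hN r (hsub hr)⟩,
    fun r hr r' hr' => hab.duhamel r (hsub hr) r' (hsub hr')⟩

theorem DuhamelIdentity.refl (t : ℝ) : DuhamelIdentity Φ μ f F t t := .of_forall fun _ => by simp

theorem DuhamelIdentity.symm (hst : DuhamelIdentity Φ μ f F s t) :
    DuhamelIdentity Φ μ f F t s := by
  filter_upwards [hst] with z hz
  rw [intervalIntegral.integral_symm, ← hz, neg_sub]

namespace TransportSolution

theorem measurable_uncurry (hf : TransportSolution Φ μ C f F) : Measurable (uncurry f) :=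
  measurable_uncurry_of_continuous_of_measurable (fun z => (hf.differentiable z).continuous)
    hf.measurable

theorem measurable_lagrangian (hf : TransportSolution Φ μ C f F) (t : ℝ) :
    Measurable (lagrangian Φ f t) :=
  (hf.measurable t).comp (hf.measurePreserving t).measurable

theorem eLpNorm_lagrangian (hf : TransportSolution Φ μ C f F) (t : ℝ) :
    eLpNorm (lagrangian Φ f t) 1 μ = eLpNorm (f t) 1 μ :=
  eLpNorm_comp_measurePreserving (hf.measurable t).aestronglyMeasurable (hf.measurePreserving t)

theorem integrable_lagrangian (hf : TransportSolution Φ μ C f F) (t : ℝ) :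
    Integrable (lagrangian Φ f t) μ :=
  (hf.measurePreserving t).integrable_comp_of_integrable (hf.integrable t)

theorem isClosed_setOf_eLpNorm_le (hf : TransportSolution Φ μ C f F) (N : ℝ≥0∞) :
    IsClosed {t | eLpNorm (f t) 1 μ ≤ N} := by
  refine IsSeqClosed.isClosed fun r a hr hra => ?_
  refine (Lp.eLpNorm_lim_le_liminf_eLpNorm (f := fun k => f (r k))
    (fun k => (hf.measurable _).aestronglyMeasurable) (f a) (.of_forall fun z =>
      ((hf.differentiable z).continuous.tendsto a).comp hra)).trans ?_
  exact liminf_le_of_frequently_le' (Frequently.of_forall hr)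

variable [BorelSpace Z]

theorem measurable_uncurry_source (hf : TransportSolution Φ μ C f F) : Measurable (uncurry F) := by
  have hΦ (r : ℝ) : Measurable fun p : ℝ × Z => (p.1, Φ r p.2) := by
    have := (Φ.continuous_toFun r).measurable
    fun_prop
  have hf_meas := hf.measurable_uncurry
  have hshift (r : ℝ) : Measurable fun p : ℝ × Z => f (p.1 + r) p.2 :=
    hf_meas.comp (f := fun p : ℝ × Z => (p.1 + r, p.2)) (by fun_prop)
  have hε : Tendsto (fun n : ℕ => (1 / (n + 1) : ℝ)) atTop (𝓝[≠] 0) :=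
    tendsto_nhdsWithin_iff.2 ⟨tendsto_one_div_add_atTop_nhds_zero_nat,
      .of_forall fun n => (Nat.one_div_pos_of_nat (α := ℝ)).ne'⟩
  refine measurable_of_tendsto_metrizable
    (f := fun (n : ℕ) (p : ℝ × Z) =>
      (1 / (n + 1) : ℝ)⁻¹ * (f (p.1 + 1 / (n + 1)) p.2 - f p.1 p.2) +
      (1 / (n + 1) : ℝ)⁻¹ * (f p.1 (Φ (1 / (n + 1)) p.2) - f p.1 p.2)) (fun n => ?_) ?_
  · exact (((hshift _).sub hf_meas).const_mul _).add
      (((hf_meas.comp (hΦ _)).sub hf_meas).const_mul _)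
  · refine tendsto_pi_nhds.2 fun ⟨t, z⟩ => ?_
    have htime := (hf.differentiable z t).hasDerivAt.tendsto_slope_zero.comp hε
    have hflow := (tendsto_flow_slope (hf.differentiableAt_flow t z)).comp hε
    simpa [uncurry, hf.source_eq, Function.comp_def] using htime.add hflow

theorem lintegral_lagrangian_source_le (hf : TransportSolution Φ μ C f F)
    (hN : eLpNorm (f t) 1 μ ≤ N) : ∫⁻ z, ‖lagrangian Φ F t z‖ₑ ∂μ ≤ C * N := by
  have hF : Measurable (F t) := hf.measurable_uncurry_source.comp measurable_prodMk_left
  calc ∫⁻ z, ‖lagrangian Φ F t z‖ₑ ∂μ = eLpNorm (F t ∘ Φ t) 1 μ :=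
        eLpNorm_one_eq_lintegral_enorm.symm
    _ = eLpNorm (F t) 1 μ :=
        eLpNorm_comp_measurePreserving hF.aestronglyMeasurable (hf.measurePreserving t)
    _ ≤ C * N := (hf.eLpNorm_source_le t).trans (by gcongr)

theorem integrable_source (hf : TransportSolution Φ μ C f F) (t : ℝ) : Integrable (F t) μ := by
  have hF : Measurable (F t) := hf.measurable_uncurry_source.comp measurable_prodMk_left
  refine memLp_one_iff_integrable.1 ⟨hF.aestronglyMeasurable, ?_⟩
  exact (hf.eLpNorm_source_le t).trans_lt
    (ENNReal.mul_lt_top ENNReal.coe_lt_top (memLp_one_iff_integrable.2 (hf.integrable t)).2)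

variable [SecondCountableTopology Z]

theorem measurable_uncurry_lagrangian_source (hf : TransportSolution Φ μ C f F) :
    Measurable (uncurry (lagrangian Φ F)) :=
  hf.measurable_uncurry_source.comp
    (measurable_fst.prodMk (Φ.continuous continuous_fst continuous_snd).measurable)

theorem stronglyMeasurable_duhamel (hf : TransportSolution Φ μ C f F) (s t : ℝ) :
    StronglyMeasurable fun z => ∫ r in s..t, lagrangian Φ F r z := by
  simp_rw [intervalIntegral.intervalIntegral_eq_integral_uIoc]
  have hmeas : StronglyMeasurable fun z => ∫ r in uIoc s t, lagrangian Φ F r z :=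
    StronglyMeasurable.integral_prod_right (f := fun z r => lagrangian Φ F r z)
      (hf.measurable_uncurry_lagrangian_source.comp measurable_swap).stronglyMeasurable
  exact hmeas.const_smul (if s ≤ t then (1 : ℝ) else -1)

variable [SFinite μ]

theorem lintegral_lintegral_source_le (hf : TransportSolution Φ μ C f F) {A : Set ℝ}
    (hA : MeasurableSet A) (hN : ∀ t ∈ A, eLpNorm (f t) 1 μ ≤ N) :
    ∫⁻ z, (∫⁻ r in A, ‖lagrangian Φ F r z‖ₑ) ∂μ ≤ C * N * volume A := by
  rw [lintegral_lintegral_swap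
    (hf.measurable_uncurry_lagrangian_source.comp measurable_swap).enorm.aemeasurable]
  calc ∫⁻ r in A, ∫⁻ z, ‖lagrangian Φ F r z‖ₑ ∂μ ≤ ∫⁻ _ in A, (C * N : ℝ≥0∞) :=
        setLIntegral_mono' hA fun r hr => hf.lintegral_lagrangian_source_le (hN r hr)
    _ = C * N * volume A := setLIntegral_const A _

theorem integrable_uncurry_source (hf : TransportSolution Φ μ C f F)
    (hN : ∀ t ∈ Icc a b, eLpNorm (f t) 1 μ ≤ N) :
    Integrable (uncurry (lagrangian Φ F)) ((volume.restrict (Icc a b)).prod μ) := by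
  refine ⟨hf.measurable_uncurry_lagrangian_source.aestronglyMeasurable, ?_⟩
  rw [HasFiniteIntegral, lintegral_prod_symm' _ hf.measurable_uncurry_lagrangian_source.enorm]
  refine (hf.lintegral_lintegral_source_le measurableSet_Icc hN).trans_lt ?_
  simp [ENNReal.mul_lt_top_iff]

theorem ae_integrableOn_source (hf : TransportSolution Φ μ C f F)
    (hN : ∀ t ∈ Icc a b, eLpNorm (f t) 1 μ ≤ N) :
    ∀ᵐ z ∂μ, IntegrableOn (fun r => lagrangian Φ F r z) (Icc a b) :=
  (hf.integrable_uncurry_source hN).prod_left_ae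

theorem eLpNorm_duhamel_le (hf : TransportSolution Φ μ C f F)
    (hN : ∀ r ∈ uIcc s t, eLpNorm (f r) 1 μ ≤ N) :
    eLpNorm (fun z => ∫ r in s..t, lagrangian Φ F r z) 1 μ ≤ C * N * ENNReal.ofReal |t - s| := by
  calc eLpNorm (fun z => ∫ r in s..t, lagrangian Φ F r z) 1 μ
      = ∫⁻ z, ‖∫ r in s..t, lagrangian Φ F r z‖ₑ ∂μ := eLpNorm_one_eq_lintegral_enorm
    _ ≤ ∫⁻ z, (∫⁻ r in uIoc s t, ‖lagrangian Φ F r z‖ₑ) ∂μ := by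
        refine lintegral_mono fun z => ?_
        rw [← ofReal_norm, intervalIntegral.norm_intervalIntegral_eq, ofReal_norm]
        exact enorm_integral_le_lintegral_enorm _
    _ ≤ C * N * volume (uIoc s t) := hf.lintegral_lintegral_source_le measurableSet_uIoc
        fun r hr => hN r (uIoc_subset_uIcc hr)
    _ = C * N * ENNReal.ofReal |t - s| := by rw [Real.volume_uIoc]

theorem integrable_duhamel (hf : TransportSolution Φ μ C f F)
    (hN : ∀ r ∈ uIcc s t, eLpNorm (f r) 1 μ ≤ N) :
    Integrable (fun z => ∫ r in s..t, lagrangian Φ F r z) μ := by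
  refine memLp_one_iff_integrable.1 ⟨(hf.stronglyMeasurable_duhamel s t).aestronglyMeasurable, ?_⟩
  exact (hf.eLpNorm_duhamel_le hN).trans_lt (by simp [ENNReal.mul_lt_top_iff])

theorem eLpNorm_le_add_of_duhamelIdentity (hf : TransportSolution Φ μ C f F)
    (hst : DuhamelIdentity Φ μ f F s t) (hN : ∀ r ∈ uIcc s t, eLpNorm (f r) 1 μ ≤ N) :
    eLpNorm (f t) 1 μ ≤ eLpNorm (f s) 1 μ + C * N * ENNReal.ofReal |t - s| := by
  have heq : lagrangian Φ f t =ᵐ[μ]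
      lagrangian Φ f s + fun z => ∫ r in s..t, lagrangian Φ F r z := by
    filter_upwards [hst] with z hz
    simp [← hz]
  calc eLpNorm (f t) 1 μ
      = eLpNorm (lagrangian Φ f s + fun z => ∫ r in s..t, lagrangian Φ F r z) 1 μ := by
        rw [← hf.eLpNorm_lagrangian, eLpNorm_congr_ae heq]
    _ ≤ eLpNorm (lagrangian Φ f s) 1 μ + eLpNorm (fun z => ∫ r in s..t, lagrangian Φ F r z) 1 μ :=
        eLpNorm_add_le (hf.measurable_lagrangian s).aestronglyMeasurable
          (hf.stronglyMeasurable_duhamel s t).aestronglyMeasurable le_rfl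
    _ ≤ eLpNorm (f s) 1 μ + C * N * ENNReal.ofReal |t - s| := by
        rw [hf.eLpNorm_lagrangian]
        gcongr
        exact hf.eLpNorm_duhamel_le hN

theorem duhamelIdentity_trans (hf : TransportSolution Φ μ C f F)
    (hN : ∀ r ∈ Icc a b, eLpNorm (f r) 1 μ ≤ N) (hs : s ∈ Icc a b) (ht : t ∈ Icc a b)
    (hu : u ∈ Icc a b) (hst : DuhamelIdentity Φ μ f F s t) (htu : DuhamelIdentity Φ μ f F t u) :
    DuhamelIdentity Φ μ f F s u := by
  filter_upwards [hst, htu, hf.ae_integrableOn_source hN] with z hst htu hint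
  rw [← intervalIntegral.integral_add_adjacent_intervals
    (intervalIntegrable_of_integrableOn_Icc hint hs ht)
    (intervalIntegrable_of_integrableOn_Icc hint ht hu), ← hst, ← htu]
  ring

end TransportSolution

theorem IsMildOn.of_forall_duhamelIdentity [SecondCountableTopology Z] [BorelSpace Z] [SFinite μ]
    (hf : TransportSolution Φ μ C f F) (hN : ∀ r ∈ Icc a b, eLpNorm (f r) 1 μ ≤ N)
    (hc : c ∈ Icc a b) (hD : ∀ s ∈ Icc a b, DuhamelIdentity Φ μ f F s c) :
    IsMildOn Φ μ f F a b :=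
  ⟨⟨N, hN⟩, fun s hs t ht => hf.duhamelIdentity_trans hN hs hc ht (hD s hs) (hD t ht).symm⟩

theorem IsMildOn.refl (hf : TransportSolution Φ μ C f F) (a : ℝ) : IsMildOn Φ μ f F a a := by
  have hfin := memLp_one_iff_integrable.2 (hf.integrable a)
  refine ⟨⟨(eLpNorm (f a) 1 μ).toNNReal, ?_⟩, ?_⟩ <;> simp only [Icc_self, mem_singleton_iff]
  · rintro _ rfl
    exact (ENNReal.coe_toNNReal hfin.2.ne).ge
  · rintro _ rfl _ rfl
    exact .refl _

theorem IsMildOn.trans [SecondCountableTopology Z] [BorelSpace Z] [SFinite μ]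
    (hf : TransportSolution Φ μ C f F) (hab : a ≤ b) (hbc : b ≤ c)
    (hl : IsMildOn Φ μ f F a b) (hr : IsMildOn Φ μ f F b c) : IsMildOn Φ μ f F a c := by
  obtain ⟨N, hN⟩ := hl.exists_eLpNorm_le
  obtain ⟨M, hM⟩ := hr.exists_eLpNorm_le
  refine .of_forall_duhamelIdentity (N := max N M) hf (fun t ht => ?_) ⟨hab, hbc⟩ fun t ht => ?_
  · rcases le_total t b with htb | htb
    · exact (hN t ⟨ht.1, htb⟩).trans (by gcongr; exact le_max_left N M)
    · exact (hM t ⟨htb, ht.2⟩).trans (by gcongr; exact le_max_right N M)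
  · rcases le_total t b with htb | htb
    · exact hl.duhamel t ⟨ht.1, htb⟩ b ⟨hab, le_rfl⟩
    · exact hr.duhamel t ⟨htb, ht.2⟩ b ⟨le_rfl, hbc⟩

end Transport

section L1Continuity
variable {Z : Type*} [MeasurableSpace Z] {μ : Measure Z}

theorem ae_eq_of_tendsto_eLpNorm_of_tendsto {ι E : Type*} [NormedAddCommGroup E] {p : ℝ≥0∞}
    {l : Filter ι} [l.NeBot] [l.IsCountablyGenerated] {f : ι → Z → E} {g h : Z → E} (hp : p ≠ 0)
    (hf : ∀ i, AEStronglyMeasurable (f i) μ) (hg : AEStronglyMeasurable g μ)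
    (hfg : Tendsto (fun i => eLpNorm (f i - g) p μ) l (𝓝 0))
    (hfh : ∀ z, Tendsto (fun i => f i z) l (𝓝 (h z))) : h =ᵐ[μ] g := by
  obtain ⟨ns, hns, hae⟩ :=
    (tendstoInMeasure_of_tendsto_eLpNorm hp hf hg hfg).exists_seq_tendsto_ae'
  filter_upwards [hae] with z hz
  exact tendsto_nhds_unique ((hfh z).comp hns) hz

variable [TopologicalSpace Z] [BorelSpace Z] [R1Space Z] [μ.InnerRegularCompactLTTop]
  [IsLocallyFiniteMeasure μ]
  {Φ : Flow ℝ Z} {f F : ℝ → Z → ℝ} {C : ℝ≥0} {a : ℝ}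

theorem tendsto_eLpNorm_comp_flow (hΦ : ∀ t, MeasurePreserving (Φ t) μ μ) {φ : Z → ℝ}
    (hφ : Integrable φ μ) (a : ℝ) :
    Tendsto (fun t => eLpNorm (φ ∘ Φ t - φ ∘ Φ a) 1 μ) (𝓝 a) (𝓝 0) := by
  have hφ' := memLp_one_iff_integrable.2 hφ
  let Φc : C(ℝ, C(Z, Z)) := ContinuousMap.curry ⟨uncurry Φ, Φ.cont'⟩
  exact (Lp.tendsto_Lp_iff_tendsto_eLpNorm'' _ (fun t => hφ'.comp_measurePreserving (hΦ t)) _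
    (hφ'.comp_measurePreserving (hΦ a))).1
    (Tendsto.compMeasurePreservingLp (f := fun _ : ℝ => hφ'.toLp φ) tendsto_const_nhds
      (Φc.continuous.tendsto a) hΦ (hΦ a) ENNReal.one_ne_top)

theorem TransportSolution.tendsto_eLpNorm_sub_of_lagrangian (hf : TransportSolution Φ μ C f F)
    {l : Filter ℝ} (hl : l ≤ 𝓝 a) {φ : Z → ℝ} (hφ : Integrable φ μ)
    (hlim : Tendsto (fun s => eLpNorm (lagrangian Φ f s - φ) 1 μ) l (𝓝 0)) :
    Tendsto (fun s => eLpNorm (f s - φ ∘ Φ (-a)) 1 μ) l (𝓝 0) := by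
  have hshift : Tendsto (fun s => eLpNorm (φ ∘ Φ (-s) - φ ∘ Φ (-a)) 1 μ) l (𝓝 0) :=
    (tendsto_eLpNorm_comp_flow hf.measurePreserving hφ (-a)).comp
      ((continuous_neg.tendsto a).mono_left hl)
  refine tendsto_of_tendsto_of_tendsto_of_le_of_le tendsto_const_nhds
    (by simpa using hlim.add hshift) (fun _ => zero_le) fun s => ?_
  have hmeas : AEStronglyMeasurable (lagrangian Φ f s - φ) μ :=
    ((hf.integrable_lagrangian s).sub hφ).aestronglyMeasurable
  have hΦs := hf.measurePreserving (-s)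
  have hsplit : f s - φ ∘ Φ (-a) =
      (lagrangian Φ f s - φ) ∘ Φ (-s) + (φ ∘ Φ (-s) - φ ∘ Φ (-a)) := by
    ext z
    simp [lagrangian, ← Φ.map_add]
  rw [hsplit]
  refine (eLpNorm_add_le (hmeas.comp_measurePreserving hΦs)
    ((hΦs.integrable_comp_of_integrable hφ).sub
      ((hf.measurePreserving _).integrable_comp_of_integrable hφ)).aestronglyMeasurable
    le_rfl).trans_eq ?_
  rw [eLpNorm_comp_measurePreserving hmeas hΦs]

theorem TransportSolution.lagrangian_ae_eq_of_tendsto (hf : TransportSolution Φ μ C f F)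
    {l : Filter ℝ} [l.NeBot] [l.IsCountablyGenerated] (hl : l ≤ 𝓝 a) {φ : Z → ℝ}
    (hφ : Integrable φ μ)
    (hlim : Tendsto (fun s => eLpNorm (lagrangian Φ f s - φ) 1 μ) l (𝓝 0)) :
    lagrangian Φ f a =ᵐ[μ] φ := by
  have hfa : f a =ᵐ[μ] φ ∘ Φ (-a) :=
    ae_eq_of_tendsto_eLpNorm_of_tendsto one_ne_zero
      (fun s => (hf.measurable s).aestronglyMeasurable)
      ((hf.measurePreserving _).integrable_comp_of_integrable hφ).aestronglyMeasurable
      (hf.tendsto_eLpNorm_sub_of_lagrangian hl hφ hlim)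
      fun z => ((hf.differentiable z).continuous.tendsto a).mono_left hl
  filter_upwards [(hf.measurePreserving a).quasiMeasurePreserving.ae_eq_comp hfa] with z hz
  simpa [lagrangian, ← Φ.map_add] using hz

end L1Continuity

section RegularTimes
variable {Z : Type*} [TopologicalSpace Z] [MeasurableSpace Z] {μ : Measure Z}
  {Φ : Flow ℝ Z} {f F : ℝ → Z → ℝ} {C N : ℝ≥0} {a b c e p q r s t : ℝ}

theorem exists_inter_ball_subset_of_subset_iUnion {X ι : Type*} [PseudoMetricSpace X]
    [CompleteSpace X] [Countable ι] {E : Set X} (hE : IsClosed E) (hne : E.Nonempty)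
    {A : ι → Set X} (hA : ∀ i, IsClosed (A i)) (hcover : E ⊆ ⋃ i, A i) :
    ∃ i, ∃ x ∈ E, ∃ ε > 0, E ∩ Metric.ball x ε ⊆ A i := by
  have := hne.to_subtype
  have := hE.completeSpace_coe
  obtain ⟨i, x, hx⟩ := nonempty_interior_of_iUnion_of_closed (X := E)
    (fun i => (hA i).preimage continuous_subtype_val)
    (by rwa [← preimage_iUnion, preimage_eq_univ_iff, Subtype.range_coe])
  obtain ⟨ε, hε, hball⟩ := Metric.mem_nhds_iff.1 (mem_interior_iff_mem_nhds.1 hx)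
  exact ⟨i, x, x.2, ε, hε, fun y hy => hball (a := ⟨y, hy.1⟩) hy.2⟩

/-- The times around which `f` is a mild solution. Its complement is the closed set to which the
category argument is applied. -/
def regularTimes (Φ : Flow ℝ Z) (μ : Measure Z) (f F : ℝ → Z → ℝ) : Set ℝ :=
  {t | ∃ a b, t ∈ Ioo a b ∧ IsMildOn Φ μ f F a b}

theorem isOpen_regularTimes : IsOpen (regularTimes Φ μ f F) :=
  isOpen_iff_mem_nhds.2 fun _ ⟨a, b, ht, hab⟩ =>
    mem_of_superset (Ioo_mem_nhds ht.1 ht.2) fun _ hs => ⟨a, b, hs, hab⟩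

namespace TransportSolution

theorem exists_nat_bound (hf : TransportSolution Φ μ C f F) (t : ℝ) :
    ∃ N : ℕ, eLpNorm (f t) 1 μ ≤ N ∧ SecondDifferenceBound Φ N (f t) := by
  obtain ⟨N, hN⟩ := hf.exists_secondDifferenceBound t
  obtain ⟨M, hM⟩ := ENNReal.exists_nat_gt (memLp_one_iff_integrable.2 (hf.integrable t)).2.ne
  refine ⟨max N M, hM.le.trans ?_, hN.mono ?_⟩
  · exact_mod_cast le_max_right N M
  · exact_mod_cast le_max_left N M

variable [BorelSpace Z] [SecondCountableTopology Z]

section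
variable [SFinite μ]

theorem isMildOn_of_Icc_subset (hf : TransportSolution Φ μ C f F) (hab : a ≤ b)
    (hreg : Icc a b ⊆ regularTimes Φ μ f F) : IsMildOn Φ μ f F a b := by
  obtain ⟨t, ht_zero, ht_mono, ⟨m, hm⟩, ht_sub⟩ := exists_monotone_Icc_subset_open_cover_Icc hab
    (ι := {p : ℝ × ℝ // IsMildOn Φ μ f F p.1 p.2}) (c := fun p => (↑) ⁻¹' Ioo p.1.1 p.1.2)
    (fun _ => isOpen_Ioo.preimage continuous_subtype_val) fun x _ => by
      obtain ⟨p, q, hx, hpq⟩ := hreg x.2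
      exact mem_iUnion.2 ⟨⟨(p, q), hpq⟩, hx⟩
  have hmild : ∀ n, IsMildOn Φ μ f F a (t n) := by
    intro n
    induction n with
    | zero => rw [ht_zero]; exact .refl hf a
    | succ n ih =>
      obtain ⟨⟨⟨p, q⟩, hpq⟩, hsub⟩ := ht_sub n
      refine ih.trans hf (t n).2.1 (ht_mono n.le_succ) (hpq.mono fun x hx => ?_)
      exact Ioo_subset_Icc_self
        (hsub (a := ⟨x, (t n).2.1.trans hx.1, hx.2.trans (t (n + 1)).2.2⟩) hx)
  exact hm m le_rfl ▸ hmild m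

theorem eLpNorm_le_two_mul (hf : TransportSolution Φ μ C f F) (hab : IsMildOn Φ μ f F a b)
    (hC : C * (b - a) ≤ 1 / 2) (hr : r ∈ Icc a b) (hs : s ∈ Icc a b) :
    eLpNorm (f r) 1 μ ≤ 2 * eLpNorm (f s) 1 μ := by
  obtain ⟨N, hN⟩ := hab.exists_eLpNorm_le
  let S := ⨆ t ∈ Icc a b, eLpNorm (f t) 1 μ
  have hle : ∀ t ∈ Icc a b, eLpNorm (f t) 1 μ ≤ S :=
    fun t ht => le_iSup₂ (f := fun t _ => eLpNorm (f t) 1 μ) t ht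
  have hS : S ≠ ⊤ := ne_top_of_le_ne_top ENNReal.coe_ne_top (iSup₂_le hN)
  have hself : S ≤ eLpNorm (f s) 1 μ + S / 2 := by
    refine iSup₂_le fun t ht => ?_
    refine (hf.eLpNorm_le_add_of_duhamelIdentity (N := S.toNNReal) (hab.duhamel s hs t ht)
      fun r hr => ?_).trans ?_
    · rw [ENNReal.coe_toNNReal hS]
      exact hle r (uIcc_subset_Icc hs ht hr)
    · have hhalf : (C : ℝ≥0∞) * ENNReal.ofReal |t - s| ≤ 2⁻¹ := by
        rw [← ENNReal.ofReal_coe_nnreal, ← ENNReal.ofReal_mul C.coe_nonneg,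
          ← ENNReal.ofReal_ofNat, ← ENNReal.ofReal_inv_of_pos two_pos]
        gcongr
        refine le_trans ?_ (hC.trans_eq (one_div 2))
        gcongr
        exact abs_sub_le_iff.2 ⟨by linarith [ht.2, hs.1], by linarith [ht.1, hs.2]⟩
      rw [ENNReal.coe_toNNReal hS, mul_right_comm, mul_comm, ENNReal.div_eq_inv_mul, mul_comm _ S]
      gcongr
  have hhalf : S / 2 ≤ eLpNorm (f s) 1 μ := by
    rw [← ENNReal.add_le_add_iff_right (ENNReal.div_ne_top hS two_ne_zero), ENNReal.add_halves]
    exact hself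
  calc eLpNorm (f r) 1 μ ≤ S := hle r hr
    _ = 2 * (S / 2) := (ENNReal.mul_div_cancel two_ne_zero ENNReal.ofNat_ne_top).symm
    _ ≤ 2 * eLpNorm (f s) 1 μ := by gcongr

end

variable [R1Space Z] [μ.InnerRegularCompactLTTop]
  [IsLocallyFiniteMeasure μ]

theorem duhamelIdentity_of_mem_closure (hf : TransportSolution Φ μ C f F)
    (hN : ∀ r ∈ Icc a b, eLpNorm (f r) 1 μ ≤ N) (hc : c ∈ Icc a b) {A : Set ℝ}
    (hA : A ⊆ Icc a b) (he : e ∈ closure A) (hD : ∀ s ∈ A, DuhamelIdentity Φ μ f F s c) :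
    DuhamelIdentity Φ μ f F e c := by
  have heI : e ∈ Icc a b := isClosed_Icc.closure_subset_iff.2 hA he
  have := mem_closure_iff_nhdsWithin_neBot.1 he
  have hbound : ∀ s ∈ A, eLpNorm (lagrangian Φ f s -
      fun z => lagrangian Φ f c z - ∫ r in e..c, lagrangian Φ F r z) 1 μ ≤
      C * N * ENNReal.ofReal |s - e| := by
    intro s hs
    refine le_trans (eLpNorm_congr_ae ?_).le
      (hf.eLpNorm_duhamel_le fun r hr => hN r (uIcc_subset_Icc heI (hA hs) hr))
    filter_upwards [hD s hs, hf.ae_integrableOn_source hN] with z hz hint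
    have hadd := intervalIntegral.integral_add_adjacent_intervals
      (intervalIntegrable_of_integrableOn_Icc hint heI (hA hs))
      (intervalIntegrable_of_integrableOn_Icc hint (hA hs) hc)
    simp only [Pi.sub_apply]
    linarith
  have hlim : Tendsto (fun s => C * N * ENNReal.ofReal |s - e|) (𝓝[A] e) (𝓝 0) := by
    have hcont : Continuous fun s => C * N * ENNReal.ofReal |s - e| :=
      (ENNReal.continuous_const_mul (by finiteness)).comp
        (ENNReal.continuous_ofReal.comp (by fun_prop))
    simpa using (hcont.tendsto e).mono_left nhdsWithin_le_nhds
  have hlag := hf.lagrangian_ae_eq_of_tendsto (l := 𝓝[A] e) nhdsWithin_le_nhds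
    ((hf.integrable_lagrangian c).sub
      (hf.integrable_duhamel fun r hr => hN r (uIcc_subset_Icc heI hc hr)))
    (tendsto_of_tendsto_of_tendsto_of_le_of_le' tendsto_const_nhds hlim
      (.of_forall fun _ => zero_le) (eventually_mem_nhdsWithin.mono hbound))
  filter_upwards [hlag] with z hz
  rw [hz]
  exact sub_sub_cancel _ _

theorem isMildOn_of_Ioo_subset (hf : TransportSolution Φ μ C f F) (hab : a ≤ b)
    (hC : C * (b - a) ≤ 1 / 2) (hreg : Ioo a b ⊆ regularTimes Φ μ f F) :
    IsMildOn Φ μ f F a b := by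
  rcases hab.eq_or_lt with rfl | hlt
  · exact .refl hf a
  obtain ⟨c, hc⟩ := nonempty_Ioo.2 hlt
  have hmild : ∀ r ∈ Ioo a b, IsMildOn Φ μ f F (min r c) (max r c) := fun r hr =>
    hf.isMildOn_of_Icc_subset min_le_max fun x hx =>
      hreg ⟨(lt_min hr.1 hc.1).trans_le hx.1, hx.2.trans_lt (max_lt hr.2 hc.2)⟩
  have hr_mem (r : ℝ) : r ∈ Icc (min r c) (max r c) := ⟨min_le_left _ _, le_max_left _ _⟩
  have hc_mem (r : ℝ) : c ∈ Icc (min r c) (max r c) := ⟨min_le_right _ _, le_max_right _ _⟩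
  have hclosure : closure (Ioo a b) = Icc a b := closure_Ioo hlt.ne
  let N : ℝ≥0 := 2 * (eLpNorm (f c) 1 μ).toNNReal
  have hN : ∀ r ∈ Icc a b, eLpNorm (f r) 1 μ ≤ N := by
    rw [← hclosure]
    refine (hf.isClosed_setOf_eLpNorm_le N).closure_subset_iff.2 fun r hr => ?_
    have hsmall : C * (max r c - min r c) ≤ 1 / 2 := by
      refine le_trans ?_ hC
      gcongr
      exacts [max_le hr.2.le hc.2.le, le_min hr.1.le hc.1.le]
    refine (hf.eLpNorm_le_two_mul (hmild r hr) hsmall (hr_mem r) (hc_mem r)).trans_eq ?_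
    rw [ENNReal.coe_mul, ENNReal.coe_toNNReal (memLp_one_iff_integrable.2 (hf.integrable c)).2.ne]
    rfl
  refine .of_forall_duhamelIdentity hf hN (Ioo_subset_Icc_self hc) fun s hs => ?_
  exact hf.duhamelIdentity_of_mem_closure hN (Ioo_subset_Icc_self hc) Ioo_subset_Icc_self
    (hclosure ▸ hs) fun r hr => (hmild r hr).duhamel r (hr_mem r) c (hc_mem r)

theorem eLpNorm_le_two_mul_of_irregular (hf : TransportSolution Φ μ C f F)
    (hC : C * (q - p) ≤ 1 / 2)
    (hN : ∀ t ∈ (regularTimes Φ μ f F)ᶜ ∩ Ioo p q, eLpNorm (f t) 1 μ ≤ N)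
    (hne : ((regularTimes Φ μ f F)ᶜ ∩ Ioo p q).Nonempty) (ht : t ∈ Ioo p q) :
    eLpNorm (f t) 1 μ ≤ 2 * N := by
  obtain ⟨e, he, hepq⟩ := hne
  have hsub : uIcc e t ⊆ Ioo p q := fun x hx =>
    ⟨(lt_min hepq.1 ht.1).trans_le hx.1, hx.2.trans_lt (max_lt hepq.2 ht.2)⟩
  obtain ⟨a, ⟨ha, hat⟩, hmin⟩ :=
    (isCompact_uIcc.inter_left isOpen_regularTimes.isClosed_compl).exists_isMinOn
      ⟨e, he, left_mem_uIcc⟩ (f := fun x => |x - t|) (by fun_prop)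
  have hmild : IsMildOn Φ μ f F (min a t) (max a t) := by
    refine hf.isMildOn_of_Ioo_subset min_le_max ?_ fun x hx => ?_
    · refine le_trans ?_ hC
      gcongr
      exacts [max_le (hsub hat).2.le ht.2.le, le_min (hsub hat).1.le ht.1.le]
    · by_contra hirr
      have hxt : x ∈ uIcc e t := uIcc_subset_uIcc hat right_mem_uIcc (Ioo_subset_Icc_self hx)
      have hnear : |x - t| < |a - t| := by
        rcases le_total a t with h | h
        · rw [min_eq_left h, max_eq_right h] at hx
          rw [abs_of_neg (by linarith [hx.2]), abs_of_nonpos (by linarith)]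
          linarith [hx.1]
        · rw [min_eq_right h, max_eq_left h] at hx
          rw [abs_of_pos (by linarith [hx.1]), abs_of_nonneg (by linarith)]
          linarith [hx.2]
      exact (hmin ⟨hirr, hxt⟩).not_gt hnear
  refine (hf.eLpNorm_le_two_mul hmild ?_ right_mem_uIcc left_mem_uIcc).trans ?_
  · refine le_trans ?_ hC
    gcongr
    exacts [max_le (hsub hat).2.le ht.2.le, le_min (hsub hat).1.le ht.1.le]
  · gcongr
    exact hN a ⟨ha, hsub hat⟩

theorem duhamelIdentity_of_secondDifferenceBound (hf : TransportSolution Φ μ C f F) (hst : s ≤ t)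
    (hC : C * (t - s) ≤ 1 / 2) (hN : ∀ r ∈ Icc s t, eLpNorm (f r) 1 μ ≤ N) {M : ℝ}
    (hM : ∀ r ∈ (regularTimes Φ μ f F)ᶜ ∩ Icc s t, SecondDifferenceBound Φ M (f r)) :
    DuhamelIdentity Φ μ f F s t := by
  let K := (regularTimes Φ μ f F)ᶜ ∩ Icc s t
  let B := insert s (insert t K)
  have hK : IsClosed K := isOpen_regularTimes.isClosed_compl.inter isClosed_Icc
  have hB : IsClosed B := isClosed_singleton.union (isClosed_singleton.union hK)
  have hBst : B ⊆ Icc s t :=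
    insert_subset (left_mem_Icc.2 hst) (insert_subset (right_mem_Icc.2 hst) inter_subset_right)
  have hgap : ∀ᵐ z ∂μ, ∀ p ∈ {p : ℝ × ℝ | IsGap B p.1 p.2},
      lagrangian Φ f p.2 z - lagrangian Φ f p.1 z = ∫ r in p.1..p.2, lagrangian Φ F r z := by
    rw [ae_ball_iff (countable_setOf_isGap B)]
    rintro ⟨c, d⟩ (hcd : IsGap B c d)
    have hc := hBst hcd.left_mem
    have hd := hBst hcd.right_mem
    have hmild : IsMildOn Φ μ f F c d := by
      refine hf.isMildOn_of_Ioo_subset hcd.lt.le (le_trans (by gcongr; exacts [hd.2, hc.1]) hC)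
        fun x hx => ?_
      by_contra hirr
      exact hcd.disjoint.notMem_of_mem_left hx
        (.inr (.inr ⟨hirr, hc.1.trans hx.1.le, hx.2.le.trans hd.2⟩))
    exact hmild.duhamel c (left_mem_Icc.2 hcd.lt.le) d (right_mem_Icc.2 hcd.lt.le)
  filter_upwards [hgap, hf.ae_integrableOn_source hN] with z hz hint
  refine sub_eq_integral_of_isGap (g := fun r => lagrangian Φ f r z) hB hBst (mem_insert _ _)
    (.inr (mem_insert _ _)) hint (fun c _ => ?_) fun c d hcd => hz (c, d) hcd
  rw [hasDerivWithinAt_iff_hasFDerivWithinAt, hasFDerivWithinAt_insert, hasFDerivWithinAt_insert]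
  by_cases hcK : c ∈ K
  · rw [← hasDerivWithinAt_iff_hasFDerivWithinAt, lagrangian, hf.source_eq]
    exact hasDerivWithinAt_lagrangian hf.differentiable hf.differentiableAt_flow hM hcK z
  · exact .of_notMem_closure (hK.closure_eq.symm ▸ hcK)

theorem Ioo_subset_regularTimes (hf : TransportSolution Φ μ C f F) (hC : C * (q - p) ≤ 1 / 2)
    (hN : ∀ t ∈ (regularTimes Φ μ f F)ᶜ ∩ Ioo p q,
      eLpNorm (f t) 1 μ ≤ N ∧ SecondDifferenceBound Φ N (f t))
    (hne : ((regularTimes Φ μ f F)ᶜ ∩ Ioo p q).Nonempty) :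
    Ioo p q ⊆ regularTimes Φ μ f F := by
  intro t ht
  obtain ⟨a, hpa, hat⟩ := exists_between ht.1
  obtain ⟨b, htb, hbq⟩ := exists_between ht.2
  have hsub : Icc a b ⊆ Ioo p q := fun x hx => ⟨hpa.trans_le hx.1, hx.2.trans_lt hbq⟩
  have hbound : ∀ r ∈ Icc a b, eLpNorm (f r) 1 μ ≤ (2 * N : ℝ≥0) := fun r hr => by
    exact_mod_cast hf.eLpNorm_le_two_mul_of_irregular hC (fun t ht => (hN t ht).1) hne (hsub hr)
  have hduhamel : ∀ r ∈ Icc a b, ∀ s ∈ Icc a b, r ≤ s → DuhamelIdentity Φ μ f F r s := by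
    intro r hr s hs hrs
    have hrs_sub := Icc_subset_Icc hr.1 hs.2
    refine hf.duhamelIdentity_of_secondDifferenceBound hrs (le_trans ?_ hC)
      (fun x hx => hbound x (hrs_sub hx)) fun x hx => (hN x ⟨hx.1, hsub (hrs_sub hx.2)⟩).2
    gcongr
    exacts [hs.2.trans hbq.le, hpa.le.trans hr.1]
  refine ⟨a, b, ⟨hat, htb⟩, ⟨_, hbound⟩, fun r hr s hs => ?_⟩
  rcases le_total r s with hrs | hsr
  · exact hduhamel r hr s hs hrs
  · exact (hduhamel s hs r hr hsr).symm

theorem regularTimes_eq_univ (hf : TransportSolution Φ μ C f F) :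
    regularTimes Φ μ f F = univ := by
  rw [← compl_empty_iff, ← not_nonempty_iff_eq_empty]
  intro hne
  obtain ⟨N, x, hx, ε, hε, hball⟩ :=
    exists_inter_ball_subset_of_subset_iUnion isOpen_regularTimes.isClosed_compl hne
      (A := fun N : ℕ => {t | eLpNorm (f t) 1 μ ≤ N} ∩ {t | SecondDifferenceBound Φ N (f t)})
      (fun N => (hf.isClosed_setOf_eLpNorm_le N).inter
        (isClosed_setOf_secondDifferenceBound (fun z => (hf.differentiable z).continuous) N))
      fun t _ => mem_iUnion.2 (hf.exists_nat_bound t)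
  obtain ⟨δ, hδ, hδC⟩ : ∃ δ > (0 : ℝ), C * (2 * δ) ≤ 1 / 2 :=
    ⟨(4 * (C + 1))⁻¹, by positivity, by field_simp; linarith⟩
  have hsub : Ioo (x - min ε δ) (x + min ε δ) ⊆ regularTimes Φ μ f F := by
    refine hf.Ioo_subset_regularTimes (N := N) (le_trans ?_ hδC) (fun t ht => ?_) ?_
    · gcongr
      linarith [min_le_right ε δ]
    · refine hball ⟨ht.1, ?_⟩
      rw [← Real.ball_eq_Ioo] at ht
      exact Metric.ball_subset_ball (min_le_left _ _) ht.2
    · exact ⟨x, hx, by simp [hε, hδ]⟩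
  exact hx (hsub (by simp [hε, hδ]))

theorem isMildOn (hf : TransportSolution Φ μ C f F) (hab : a ≤ b) : IsMildOn Φ μ f F a b :=
  hf.isMildOn_of_Icc_subset hab (hf.regularTimes_eq_univ ▸ subset_univ _)

end TransportSolution
end RegularTimes

section Moments
variable {Z : Type*} [TopologicalSpace Z] [MeasurableSpace Z] [BorelSpace Z] {μ : Measure Z}
  {Φ : Flow ℝ Z} {f F : ℝ → Z → ℝ} {C : ℝ≥0} {s t : ℝ} {ψ : Z → ℝ} {K : ℝ}

theorem integral_mul_lagrangian (hΦ : MeasurePreserving (Φ t) μ μ)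
    (hinv : ∀ z, ψ (Φ t z) = ψ z) (g : ℝ → Z → ℝ) :
    ∫ z, ψ z * lagrangian Φ g t z ∂μ = ∫ z, ψ z * g t z ∂μ := by
  have h := hΦ.integral_comp (Φ.toHomeomorph t).measurableEmbedding fun z => ψ z * g t z
  simp only [hinv] at h
  exact h

variable [SecondCountableTopology Z] [R1Space Z] [μ.InnerRegularCompactLTTop]
  [IsLocallyFiniteMeasure μ]

namespace TransportSolution

theorem tendsto_eLpNorm_sub (hf : TransportSolution Φ μ C f F) (t : ℝ) :
    Tendsto (fun s => eLpNorm (f s - f t) 1 μ) (𝓝 t) (𝓝 0) := by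
  obtain ⟨⟨N, hN⟩, hduhamel⟩ := hf.isMildOn (show t - 1 ≤ t + 1 by linarith)
  have ht : t ∈ Icc (t - 1) (t + 1) := ⟨by linarith, by linarith⟩
  have hbound : ∀ s ∈ Icc (t - 1) (t + 1),
      eLpNorm (lagrangian Φ f s - lagrangian Φ f t) 1 μ ≤ C * N * ENNReal.ofReal |s - t| := by
    intro s hs
    refine (eLpNorm_congr_ae (hduhamel t ht s hs)).trans_le ?_
    exact hf.eLpNorm_duhamel_le fun r hr => hN r (uIcc_subset_Icc ht hs hr)
  have hlim : Tendsto (fun s => C * N * ENNReal.ofReal |s - t|) (𝓝 t) (𝓝 0) := by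
    have hcont : Continuous fun s => C * N * ENNReal.ofReal |s - t| :=
      (ENNReal.continuous_const_mul (by finiteness)).comp
        (ENNReal.continuous_ofReal.comp (by fun_prop))
    simpa using hcont.tendsto t
  have hlag := hf.tendsto_eLpNorm_sub_of_lagrangian le_rfl (hf.integrable_lagrangian t)
    (tendsto_of_tendsto_of_tendsto_of_le_of_le' tendsto_const_nhds hlim
      (.of_forall fun _ => zero_le)
      (mem_of_superset (Icc_mem_nhds (by linarith) (by linarith)) hbound))
  have hback : lagrangian Φ f t ∘ Φ (-t) = f t := by
    ext z
    simp [lagrangian, ← Φ.map_add]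
  rwa [hback] at hlag

theorem continuous_integral_mul (hf : TransportSolution Φ μ C f F)
    (hψ : AEStronglyMeasurable ψ μ) (hK : ∀ z, |ψ z| ≤ K) :
    Continuous fun t => ∫ z, ψ z * f t z ∂μ := by
  refine continuous_iff_continuousAt.2 fun t => ?_
  have hint (s : ℝ) : Integrable (fun z => ψ z * f s z) μ :=
    (hf.integrable s).bdd_mul hψ (.of_forall hK)
  refine tendsto_integral_of_L1' _ (hint t).aestronglyMeasurable (.of_forall hint) ?_
  have hlim := ENNReal.Tendsto.const_mul (a := ENNReal.ofReal K) (hf.tendsto_eLpNorm_sub t)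
    (.inr ENNReal.ofReal_ne_top)
  rw [mul_zero] at hlim
  refine tendsto_of_tendsto_of_tendsto_of_le_of_le tendsto_const_nhds hlim
    (fun _ => zero_le) fun s => ?_
  refine eLpNorm_le_mul_eLpNorm_of_ae_le_mul (.of_forall fun z => ?_) 1
  simp only [Pi.sub_apply, ← mul_sub, norm_mul]
  gcongr
  exact hK z

theorem integral_mul_sub_integral_mul (hf : TransportSolution Φ μ C f F) (hψ : Measurable ψ)
    (hK : ∀ z, |ψ z| ≤ K) (hinv : ∀ t z, ψ (Φ t z) = ψ z) (hst : s ≤ t) :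
    (∫ z, ψ z * f t z ∂μ) - ∫ z, ψ z * f s z ∂μ = ∫ r in s..t, ∫ z, ψ z * F r z ∂μ := by
  obtain ⟨⟨N, hN⟩, hduhamel⟩ := hf.isMildOn hst
  have hint (t : ℝ) : Integrable (fun z => ψ z * lagrangian Φ f t z) μ :=
    (hf.integrable_lagrangian t).bdd_mul hψ.aestronglyMeasurable (.of_forall hK)
  have hprod : Integrable (uncurry fun r z => ψ z * lagrangian Φ F r z)
      ((volume.restrict (Icc s t)).prod μ) :=
    (hf.integrable_uncurry_source hN).bdd_mul (hψ.comp measurable_snd).aestronglyMeasurable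
      (.of_forall fun p => hK p.2)
  calc (∫ z, ψ z * f t z ∂μ) - ∫ z, ψ z * f s z ∂μ
      = ∫ z, (ψ z * lagrangian Φ f t z - ψ z * lagrangian Φ f s z) ∂μ := by
        rw [integral_sub (hint t) (hint s)]
        simp only [integral_mul_lagrangian (hf.measurePreserving _) (hinv _)]
    _ = ∫ z, (∫ r in Icc s t, ψ z * lagrangian Φ F r z) ∂μ := by
        refine integral_congr_ae ?_
        filter_upwards [hduhamel s (left_mem_Icc.2 hst) t (right_mem_Icc.2 hst)] with z hz
        rw [← mul_sub, hz, intervalIntegral.integral_of_le hst, integral_const_mul,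
          integral_Icc_eq_integral_Ioc]
    _ = ∫ r in s..t, ∫ z, ψ z * F r z ∂μ := by
        rw [← integral_integral_swap hprod, intervalIntegral.integral_of_le hst,
          integral_Icc_eq_integral_Ioc]
        simp only [integral_mul_lagrangian (hf.measurePreserving _) (hinv _)]

theorem hasDerivAt_integral_mul (hf : TransportSolution Φ μ C f F) (hψ : Measurable ψ)
    (hK : ∀ z, |ψ z| ≤ K) (hinv : ∀ t z, ψ (Φ t z) = ψ z)
    (hcont : Continuous fun t => ∫ z, ψ z * F t z ∂μ) (t : ℝ) :
    HasDerivAt (fun s => ∫ z, ψ z * f s z ∂μ) (∫ z, ψ z * F t z ∂μ) t := by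
  refine ((hcont.integral_hasStrictDerivAt (t - 1) t).hasDerivAt.const_add
    (∫ z, ψ z * f (t - 1) z ∂μ)).congr_of_eventuallyEq ?_
  filter_upwards [Ioi_mem_nhds (show t - 1 < t by linarith)] with s hs
  rw [← hf.integral_mul_sub_integral_mul hψ hK hinv (le_of_lt hs), add_sub_cancel]

end TransportSolution
end Moments

section WeightedNorm
open scoped Convolution
variable {E : Type*} [NormedAddCommGroup E] [NormedSpace ℝ E] {g h : ℝ → E} {φ : ℝ → ℝ}

/-- The norm of `L¹((1 + v²) dv)`, which controls the density, momentum and energy of a velocity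
profile. -/
noncomputable def weightedNorm (g : ℝ → E) : ℝ≥0∞ := ∫⁻ v : ℝ, ‖(1 + v ^ 2) • g v‖ₑ

theorem weightedNorm_mono {E' : Type*} [NormedAddCommGroup E'] [NormedSpace ℝ E'] {h : ℝ → E'}
    (hgh : ∀ v, ‖g v‖ ≤ ‖h v‖) : weightedNorm g ≤ weightedNorm h :=
  lintegral_mono fun v => by
    simp only [enorm_smul]
    gcongr
    exact enorm_le_iff_norm_le.2 (hgh v)

theorem weightedNorm_const_smul (c : ℝ) (g : ℝ → E) :
    weightedNorm (c • g) = ‖c‖ₑ * weightedNorm g := by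
  simp only [weightedNorm, Pi.smul_apply, smul_comm _ c, enorm_smul c]
  exact lintegral_const_mul' _ _ enorm_ne_top

theorem aemeasurable_enorm_weighted (hg : AEStronglyMeasurable g volume) :
    AEMeasurable (fun v : ℝ => ‖(1 + v ^ 2) • g v‖ₑ) volume :=
  have hweight : AEStronglyMeasurable (fun v : ℝ => 1 + v ^ 2) volume := by fun_prop
  (hweight.smul hg).enorm

theorem weightedNorm_sub_le (hg : AEStronglyMeasurable g volume) :
    weightedNorm (g - h) ≤ weightedNorm g + weightedNorm h := by
  simp only [weightedNorm, Pi.sub_apply, smul_sub]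
  exact (lintegral_mono fun v => enorm_sub_le).trans_eq
    (lintegral_add_left' (aemeasurable_enorm_weighted hg) _)

theorem integrable_smul_of_abs_le_one_add_sq {a : ℝ → ℝ} (ha : Continuous a)
    (hbound : ∀ v, |a v| ≤ 1 + v ^ 2) (hg : Integrable fun v : ℝ => (1 + v ^ 2) • g v) :
    Integrable fun v => a v • g v := by
  have hpos (v : ℝ) : 0 < 1 + v ^ 2 := by positivity
  have hcont : Continuous fun v : ℝ => a v / (1 + v ^ 2) :=
    ha.div (by fun_prop) fun v => (hpos v).ne'
  refine (hg.bdd_smul 1 hcont.aestronglyMeasurable (.of_forall fun v => ?_)).congr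
    (.of_forall fun v => ?_)
  · rw [norm_div, Real.norm_eq_abs, Real.norm_of_nonneg (hpos v).le]
    exact div_le_one_of_le₀ (hbound v) (hpos v).le
  · simp only [Pi.smul_apply', smul_smul, div_mul_cancel₀ _ (hpos v).ne']

theorem abs_le_one_add_sq (v : ℝ) : |v| ≤ 1 + v ^ 2 := by
  nlinarith [sq_nonneg (|v| - 1), sq_abs v]

theorem abs_div_one_add_sq_le {b K v : ℝ} (hb : |b| ≤ K * (1 + v ^ 2)) :
    |b / (1 + v ^ 2)| ≤ K := by
  have hpos : 0 < 1 + v ^ 2 := by positivity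
  rwa [abs_div, abs_of_pos hpos, div_le_iff₀ hpos]

theorem integrable_of_weighted (hg : Integrable fun v : ℝ => (1 + v ^ 2) • g v) : Integrable g := by
  simpa using integrable_smul_of_abs_le_one_add_sq (a := fun _ => 1) continuous_const
    (fun v => by simp [sq_nonneg]) hg

theorem integrable_id_smul_of_weighted (hg : Integrable fun v : ℝ => (1 + v ^ 2) • g v) :
    Integrable fun v => v • g v :=
  integrable_smul_of_abs_le_one_add_sq continuous_id abs_le_one_add_sq hg

theorem enorm_one_add_sq_le (v w : ℝ) :
    ‖1 + v ^ 2‖ₑ ≤ 2 * ‖1 + w ^ 2‖ₑ * ‖1 + (v - w) ^ 2‖ₑ := by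
  rw [mul_assoc, ← enorm_mul, show (2 : ℝ≥0∞) = ‖(2 : ℝ)‖ₑ by simp [enorm_eq_nnnorm], ← enorm_mul,
    enorm_le_iff_norm_le, Real.norm_of_nonneg (by positivity), Real.norm_of_nonneg (by positivity)]
  nlinarith [sq_nonneg (v - w - w), sq_nonneg (w * (v - w)), sq_nonneg (v - w), sq_nonneg w]

theorem enorm_weighted_convolution_le (φ : ℝ → ℝ) (g : ℝ → E) (v : ℝ) :
    ‖(1 + v ^ 2) • (φ ⋆ g) v‖ₑ ≤
      ∫⁻ w, (2 * ‖(1 + w ^ 2) • φ w‖ₑ) * ‖(1 + (v - w) ^ 2) • g (v - w)‖ₑ := by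
  rw [convolution_def, ← integral_smul]
  refine (enorm_integral_le_lintegral_enorm _).trans (lintegral_mono fun w => ?_)
  simp only [ContinuousLinearMap.lsmul_apply, enorm_smul]
  calc ‖1 + v ^ 2‖ₑ * (‖φ w‖ₑ * ‖g (v - w)‖ₑ)
      ≤ (2 * ‖1 + w ^ 2‖ₑ * ‖1 + (v - w) ^ 2‖ₑ) * (‖φ w‖ₑ * ‖g (v - w)‖ₑ) := by
        gcongr
        exact enorm_one_add_sq_le v w
    _ = 2 * (‖1 + w ^ 2‖ₑ * ‖φ w‖ₑ) * (‖1 + (v - w) ^ 2‖ₑ * ‖g (v - w)‖ₑ) := by ring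

theorem weightedNorm_convolution_le (hφ : AEStronglyMeasurable φ volume)
    (hg : AEStronglyMeasurable g volume) :
    weightedNorm (φ ⋆ g) ≤ 2 * weightedNorm φ * weightedNorm g := by
  have hφ' : AEMeasurable (fun w : ℝ => 2 * ‖(1 + w ^ 2) • φ w‖ₑ) :=
    (aemeasurable_enorm_weighted hφ).const_mul 2
  have hgsub : AEMeasurable (fun p : ℝ × ℝ => ‖(1 + (p.1 - p.2) ^ 2) • g (p.1 - p.2)‖ₑ)
      (volume.prod volume) :=
    (aemeasurable_enorm_weighted hg).comp_quasiMeasurePreserving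
      (quasiMeasurePreserving_sub_of_right_invariant volume volume)
  calc weightedNorm (φ ⋆ g)
      ≤ ∫⁻ v, ∫⁻ w, (2 * ‖(1 + w ^ 2) • φ w‖ₑ) * ‖(1 + (v - w) ^ 2) • g (v - w)‖ₑ :=
        lintegral_mono (enorm_weighted_convolution_le φ g)
    _ = ∫⁻ w, ∫⁻ v, (2 * ‖(1 + w ^ 2) • φ w‖ₑ) * ‖(1 + (v - w) ^ 2) • g (v - w)‖ₑ :=
        lintegral_lintegral_swap <| hφ'.comp_snd.mul hgsub
    _ = ∫⁻ w, (2 * ‖(1 + w ^ 2) • φ w‖ₑ) * weightedNorm g := by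
        congr 1 with w
        rw [lintegral_const_mul' _ _ (by finiteness)]
        exact congrArg _ (lintegral_sub_right_eq_self (fun p => ‖(1 + p ^ 2) • g p‖ₑ) w)
    _ = 2 * weightedNorm φ * weightedNorm g := by
        rw [lintegral_mul_const'' _ hφ', lintegral_const_mul' _ _ (by finiteness), weightedNorm,
          weightedNorm]

theorem integrable_weighted_convolution (hφ : Integrable fun v : ℝ => (1 + v ^ 2) • φ v)
    (hg : Integrable fun v : ℝ => (1 + v ^ 2) • g v) :
    Integrable fun v : ℝ => (1 + v ^ 2) • (φ ⋆ g) v := by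
  have hφ₀ := integrable_of_weighted hφ
  have hg₀ := integrable_of_weighted hg
  have hweight : AEStronglyMeasurable (fun v : ℝ => 1 + v ^ 2) volume := by fun_prop
  refine ⟨hweight.smul (hφ₀.integrable_convolution _ hg₀).aestronglyMeasurable, ?_⟩
  refine (weightedNorm_convolution_le hφ₀.aestronglyMeasurable
    hg₀.aestronglyMeasurable).trans_lt ?_
  exact ENNReal.mul_lt_top (ENNReal.mul_lt_top (by finiteness) hφ.2) hg.2

theorem integral_id_smul_convolution [CompleteSpace E]
    (hφ : Integrable fun v : ℝ => (1 + v ^ 2) • φ v)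
    (hg : Integrable fun v : ℝ => (1 + v ^ 2) • g v) :
    ∫ v, v • (φ ⋆ g) v = (∫ v, v * φ v) • (∫ v, g v) + (∫ v, φ v) • ∫ v, v • g v := by
  have hφ₀ := integrable_of_weighted hφ
  have hφ₁ := integrable_id_smul_of_weighted hφ
  have hg₀ := integrable_of_weighted hg
  have hg₁ := integrable_id_smul_of_weighted hg
  let L := ContinuousLinearMap.lsmul ℝ ℝ (E := E)
  have hsplit : (fun v => v • (φ ⋆ g) v) =ᵐ[volume]
      ((fun w => w • φ w) ⋆ g) + (φ ⋆ fun p => p • g p) := by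
    filter_upwards [hφ₁.ae_convolution_exists L hg₀, hφ₀.ae_convolution_exists L hg₁]
      with v h₁₀ h₀₁
    rw [Pi.add_apply, convolution_def, convolution_def, convolution_def, ← integral_smul,
      ← integral_add h₁₀ h₀₁]
    congr 1 with w
    change v • φ w • g (v - w) = (w • φ w) • g (v - w) + φ w • (v - w) • g (v - w)
    module
  rw [integral_congr_ae hsplit, integral_add' (hφ₁.integrable_convolution L hg₀)
    (hφ₀.integrable_convolution L hg₁), integral_convolution L hφ₁ hg₀,
    integral_convolution L hφ₀ hg₁]
  simp only [L, ContinuousLinearMap.lsmul_apply, smul_eq_mul]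

end WeightedNorm

section MomentumKernel
open scoped SchwartzMap FourierTransform LineDeriv
variable {F : Type*} [NormedAddCommGroup F] [NormedSpace ℝ F] {ℏ : ℝ}

theorem integrable_one_add_sq_smul_schwartzMap (g : 𝓢(ℝ, F)) :
    Integrable fun v : ℝ => (1 + v ^ 2) • g v := by
  have hweight : (fun v : ℝ => 1 + v ^ 2).HasTemperateGrowth := by fun_prop
  exact (SchwartzMap.smulLeftCLM F (fun v : ℝ => 1 + v ^ 2) g).integrable.congr
    (.of_forall fun v => SchwartzMap.smulLeftCLM_apply_apply hweight g v)

/-- The Schwartz function `y ↦ g (c * y)`. -/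
noncomputable def dilate {c : ℝ} (hc : c ≠ 0) (g : 𝓢(ℝ, F)) : 𝓢(ℝ, F) :=
  SchwartzMap.compCLMOfContinuousLinearEquiv ℝ
    (ContinuousLinearEquiv.unitsEquivAut ℝ (Units.mk0 c hc)) g

theorem dilate_apply {c : ℝ} (hc : c ≠ 0) (g : 𝓢(ℝ, F)) (y : ℝ) : dilate hc g y = g (c * y) :=
  congrArg g (mul_comm y c)

theorem integral_fourier_schwartzMap (g : 𝓢(ℝ, ℂ)) : ∫ ξ, 𝓕 g ξ = g 0 := by
  have h : 𝓕⁻ (𝓕 g) 0 = g 0 := by rw [FourierTransform.fourierInv_fourier_eq]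
  rw [← h, SchwartzMap.fourierInv_coe, Real.fourierInv_eq']
  simp

theorem integral_id_smul_fourier_schwartzMap (g : 𝓢(ℝ, ℂ)) :
    ∫ ξ : ℝ, ξ • 𝓕 g ξ = (2 * Real.pi * I)⁻¹ * deriv g 0 := by
  have h := integral_fourier_schwartzMap (∂_{(1 : ℝ)} g)
  have hgrowth : (inner ℝ · (1 : ℝ)).HasTemperateGrowth := by fun_prop
  simp only [SchwartzMap.fourier_lineDerivOp_eq, smul_apply,
    SchwartzMap.smulLeftCLM_apply_apply hgrowth, integral_smul] at h
  rw [SchwartzMap.lineDerivOp_apply_eq_fderiv, fderiv_apply_one_eq_deriv] at h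
  rw [← h, smul_eq_mul, inv_mul_cancel_left₀ two_pi_I_ne_zero]
  simp

theorem norm_fourier_compSubConstCLM (a : ℝ) (g : 𝓢(ℝ, ℂ)) (ξ : ℝ) :
    ‖𝓕 (SchwartzMap.compSubConstCLM ℝ a g) ξ‖ = ‖𝓕 g ξ‖ := by
  have h := congrFun (VectorFourier.fourierIntegral_comp_add_right Real.fourierChar volume
    (innerₗ ℝ) g (-a)) ξ
  rw [SchwartzMap.fourier_coe, SchwartzMap.fourier_coe]
  exact (congrArg norm h).trans (Circle.norm_smul _ _)

/-- The function `p ↦ (-i)/(2πℏ²) ∫ g(y) exp(i y p / ℏ) dy`, written as a rescaled Fourier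
transform. -/
noncomputable def momentumKernel (hℏ : 0 < ℏ) (g : 𝓢(ℝ, ℂ)) : 𝓢(ℝ, ℂ) :=
  (-I / (2 * Real.pi * ℏ ^ 2)) •
    dilate (c := -(2 * Real.pi * ℏ)⁻¹) (neg_ne_zero.2 (by positivity)) (𝓕 g)

theorem momentumKernel_apply (hℏ : 0 < ℏ) (g : 𝓢(ℝ, ℂ)) (p : ℝ) :
    momentumKernel hℏ g p =
      (-I / (2 * Real.pi * ℏ ^ 2)) * 𝓕 g (-(2 * Real.pi * ℏ)⁻¹ * p) := by
  rw [momentumKernel, smul_apply, dilate_apply, smul_eq_mul]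

theorem momentumKernel_eq_integral (hℏ : 0 < ℏ) (g : 𝓢(ℝ, ℂ)) (p : ℝ) :
    momentumKernel hℏ g p =
      (-I / (2 * Real.pi * ℏ ^ 2)) * ∫ y : ℝ, g y * cexp (I * y * p / ℏ) := by
  rw [momentumKernel_apply, SchwartzMap.fourier_coe, Real.fourier_eq']
  congr 2 with y
  rw [smul_eq_mul, mul_comm]
  congr 2
  simp only [RCLike.inner_apply, conj_trivial]
  have := hℏ.ne'
  push_cast
  field_simp

theorem integral_momentumKernel (hℏ : 0 < ℏ) (g : 𝓢(ℝ, ℂ)) :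
    ∫ p, momentumKernel hℏ g p = -I / ℏ * g 0 := by
  simp only [momentumKernel_apply]
  rw [integral_const_mul, Measure.integral_comp_mul_left, integral_fourier_schwartzMap,
    inv_neg, inv_inv, abs_neg, abs_of_pos (by positivity), real_smul]
  have : (ℏ : ℂ) ≠ 0 := mod_cast hℏ.ne'
  push_cast
  field_simp

theorem integral_id_smul_momentumKernel (hℏ : 0 < ℏ) (g : 𝓢(ℝ, ℂ)) :
    ∫ p : ℝ, p • momentumKernel hℏ g p = deriv g 0 := by
  have hℏ₀ : (ℏ : ℂ) ≠ 0 := mod_cast hℏ.ne'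
  have hrescale (p : ℝ) : p • momentumKernel hℏ g p = (I / ℏ) *
      ((-(2 * Real.pi * ℏ)⁻¹ * p) • 𝓕 g (-(2 * Real.pi * ℏ)⁻¹ * p)) := by
    rw [momentumKernel_apply, real_smul, real_smul]
    push_cast
    field_simp
  simp only [hrescale]
  rw [integral_const_mul, Measure.integral_comp_mul_left (fun ξ => ξ • 𝓕 g ξ),
    integral_id_smul_fourier_schwartzMap, inv_neg, inv_inv, abs_neg, abs_of_pos (by positivity),
    real_smul]
  push_cast
  field_simp

theorem weightedNorm_momentumKernel_compSubConstCLM (hℏ : 0 < ℏ) (a : ℝ) (g : 𝓢(ℝ, ℂ)) :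
    weightedNorm (momentumKernel hℏ (SchwartzMap.compSubConstCLM ℝ a g)) ≤
      weightedNorm (momentumKernel hℏ g) :=
  weightedNorm_mono fun p => by
    simp only [momentumKernel_apply, norm_mul, norm_fourier_compSubConstCLM, le_refl]

theorem momentumKernel_sub (hℏ : 0 < ℏ) (g h : 𝓢(ℝ, ℂ)) :
    momentumKernel hℏ (g - h) = momentumKernel hℏ g - momentumKernel hℏ h := by
  have hfourier : 𝓕 (g - h) = 𝓕 g - 𝓕 h :=
    map_sub (FourierTransform.fourierCLM ℂ 𝓢(ℝ, ℂ)) g h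
  ext p
  simp only [sub_apply, momentumKernel_apply, hfourier, mul_sub]

end MomentumKernel

section WignerKernel
open scoped SchwartzMap Convolution
variable {ℏ : ℝ} {φ : ℝ → ℝ}

/-- The Schwartz function `y ↦ V (x + y / 2) - V (x - y / 2)`. It is the difference of two
translates of `x`-independent functions, which is what makes bounds uniform in `x`. -/
noncomputable def centredDifference (V : 𝓢(ℝ, ℝ)) (x : ℝ) : 𝓢(ℝ, ℂ) :=
  SchwartzMap.compSubConstCLM ℝ (-(2 * x))
      (dilate (c := 2⁻¹) (by norm_num) (V.postcompCLM ofRealCLM)) -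
    SchwartzMap.compSubConstCLM ℝ (2 * x)
      (dilate (c := -2⁻¹) (by norm_num) (V.postcompCLM ofRealCLM))

theorem centredDifference_apply (V : 𝓢(ℝ, ℝ)) (x y : ℝ) :
    centredDifference V x y = ((V (x + y / 2) - V (x - y / 2) : ℝ) : ℂ) := by
  have hplus : (2 : ℝ)⁻¹ * (y - -(2 * x)) = x + y / 2 := by ring
  have hminus : -(2 : ℝ)⁻¹ * (y - 2 * x) = x - y / 2 := by ring
  simp only [centredDifference, sub_apply, SchwartzMap.compSubConstCLM_apply, dilate_apply,
    SchwartzMap.postcompCLM_apply, ofRealCLM_apply, hplus, hminus, ofReal_sub]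

theorem deriv_centredDifference_zero (V : 𝓢(ℝ, ℝ)) (x : ℝ) :
    deriv (centredDifference V x) 0 = ((deriv V x : ℝ) : ℂ) := by
  have hV {y : ℝ} (hy : y = x) : HasDerivAt V (deriv V x) y :=
    hy ▸ V.differentiableAt.hasDerivAt
  have hhalf := (hasDerivAt_id (0 : ℝ)).div_const 2
  have hplus := (hV (by simp)).comp (0 : ℝ) (hhalf.const_add x)
  have hminus := (hV (by simp)).comp (0 : ℝ) (hhalf.const_sub x)
  rw [show ⇑(centredDifference V x) = _ from funext (centredDifference_apply V x)]
  refine ((hplus.sub hminus).congr_deriv ?_).ofReal_comp.deriv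
  ring

/-- The kernel through which `wignerTheta ℏ V · x` acts by convolution in the velocity. -/
noncomputable def wignerKernel (hℏ : 0 < ℏ) (V : 𝓢(ℝ, ℝ)) (x : ℝ) : 𝓢(ℝ, ℂ) :=
  momentumKernel hℏ (centredDifference V x)

theorem integral_wignerKernel (hℏ : 0 < ℏ) (V : 𝓢(ℝ, ℝ)) (x : ℝ) :
    ∫ p, wignerKernel hℏ V x p = 0 := by
  simp [wignerKernel, integral_momentumKernel, centredDifference_apply]

theorem integral_id_smul_wignerKernel (hℏ : 0 < ℏ) (V : 𝓢(ℝ, ℝ)) (x : ℝ) :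
    ∫ p : ℝ, p • wignerKernel hℏ V x p = ((deriv V x : ℝ) : ℂ) :=
  (integral_id_smul_momentumKernel hℏ _).trans (deriv_centredDifference_zero V x)

theorem exists_weightedNorm_wignerKernel_le (hℏ : 0 < ℏ) (V : 𝓢(ℝ, ℝ)) :
    ∃ C : ℝ≥0, ∀ x, weightedNorm (wignerKernel hℏ V x) ≤ C := by
  let Vplus := dilate (c := (2 : ℝ)⁻¹) (by norm_num) (V.postcompCLM ofRealCLM)
  let Vminus := dilate (c := -(2 : ℝ)⁻¹) (by norm_num) (V.postcompCLM ofRealCLM)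
  have hfinite (g : 𝓢(ℝ, ℂ)) : weightedNorm g ≠ ∞ :=
    (integrable_one_add_sq_smul_schwartzMap g).2.ne
  refine ⟨(weightedNorm (momentumKernel hℏ Vplus) +
    weightedNorm (momentumKernel hℏ Vminus)).toNNReal, fun x => ?_⟩
  rw [ENNReal.coe_toNNReal (ENNReal.add_ne_top.2 ⟨hfinite _, hfinite _⟩), wignerKernel,
    centredDifference, momentumKernel_sub]
  exact (weightedNorm_sub_le (SchwartzMap.continuous _).aestronglyMeasurable).trans <|
    add_le_add (weightedNorm_momentumKernel_compSubConstCLM hℏ _ _)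
      (weightedNorm_momentumKernel_compSubConstCLM hℏ _ _)

theorem wignerTheta_eq_convolution (hℏ : 0 < ℏ) (V : 𝓢(ℝ, ℝ)) (hφ : Integrable φ) (x : ℝ) :
    wignerTheta ℏ V (fun w => (φ w : ℂ)) x = φ ⋆ wignerKernel hℏ V x := by
  ext v
  have hphase (y w : ℝ) : cexp (I * y * v / ℏ) * cexp (-I * y * w / ℏ) =
      cexp (I * y * (v - w : ℝ) / ℏ) := by
    rw [← Complex.exp_add]
    congr 1
    push_cast
    ring
  have hintegrand (y w : ℝ) : centredDifference V x y * cexp (I * y * v / ℏ) *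
      (φ w * cexp (-I * y * w / ℏ)) =
      φ w * (centredDifference V x y * cexp (I * y * (v - w : ℝ) / ℏ)) := by
    rw [← hphase]
    ring
  have hnorm (y w : ℝ) : ‖cexp (I * y * (v - w : ℝ) / ℏ)‖ = 1 := by
    rw [show I * y * (v - w : ℝ) / ℏ = ((y * (v - w) / ℏ : ℝ) : ℂ) * I by push_cast; ring,
      norm_exp_ofReal_mul_I]
  have hprod : Integrable (uncurry fun y w : ℝ =>
      φ w * (centredDifference V x y * cexp (I * y * (v - w : ℝ) / ℏ))) := by
    refine (((centredDifference V x).integrable.mul_prod hφ.ofReal).mul_bdd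
      (g := fun z : ℝ × ℝ => cexp (I * z.1 * (v - z.2 : ℝ) / ℏ))
      (Continuous.aestronglyMeasurable (by fun_prop))
      (.of_forall fun z => (hnorm z.1 z.2).le)).congr (.of_forall fun z => ?_)
    simp only [uncurry_def]
    exact (mul_right_comm _ _ _).trans (mul_comm _ _)
  simp only [wignerTheta, ← centredDifference_apply, convolution_def, wignerKernel,
    momentumKernel_eq_integral, ContinuousLinearMap.lsmul_apply, real_smul,
    mul_left_comm (φ _ : ℂ), integral_const_mul]
  congr 1
  simp only [← integral_const_mul, hintegrand]
  exact integral_integral_swap hprod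

theorem integrable_weighted_wignerTheta (hℏ : 0 < ℏ) (V : 𝓢(ℝ, ℝ))
    (hφ : Integrable fun v : ℝ => (1 + v ^ 2) • φ v) (x : ℝ) :
    Integrable fun v : ℝ => (1 + v ^ 2) • wignerTheta ℏ V (fun w => (φ w : ℂ)) x v := by
  rw [wignerTheta_eq_convolution hℏ V (integrable_of_weighted hφ)]
  exact integrable_weighted_convolution hφ (integrable_one_add_sq_smul_schwartzMap _)

theorem exists_weightedNorm_wignerTheta_le (hℏ : 0 < ℏ) (V : 𝓢(ℝ, ℝ)) :
    ∃ C : ℝ≥0, ∀ (φ : ℝ → ℝ) (x : ℝ), (Integrable fun v : ℝ => (1 + v ^ 2) • φ v) →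
      weightedNorm (wignerTheta ℏ V (fun w => (φ w : ℂ)) x) ≤ C * weightedNorm φ := by
  obtain ⟨C, hC⟩ := exists_weightedNorm_wignerKernel_le hℏ V
  refine ⟨2 * C, fun φ x hφ => ?_⟩
  have hφ₀ := integrable_of_weighted hφ
  rw [wignerTheta_eq_convolution hℏ V hφ₀]
  calc weightedNorm (φ ⋆ wignerKernel hℏ V x)
      ≤ 2 * weightedNorm φ * weightedNorm (wignerKernel hℏ V x) :=
        weightedNorm_convolution_le hφ₀.aestronglyMeasurable
          (SchwartzMap.continuous _).aestronglyMeasurable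
    _ ≤ 2 * weightedNorm φ * C := by gcongr; exact hC x
    _ = (2 * C : ℝ≥0) * weightedNorm φ := by push_cast; ring

theorem integral_id_smul_wignerTheta (hℏ : 0 < ℏ) (V : 𝓢(ℝ, ℝ))
    (hφ : Integrable fun v : ℝ => (1 + v ^ 2) • φ v) (x : ℝ) :
    ∫ v : ℝ, v • wignerTheta ℏ V (fun w => (φ w : ℂ)) x v =
      (((∫ v, φ v) * deriv V x : ℝ) : ℂ) := by
  rw [wignerTheta_eq_convolution hℏ V (integrable_of_weighted hφ),
    integral_id_smul_convolution hφ (integrable_one_add_sq_smul_schwartzMap _),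
    integral_wignerKernel, integral_id_smul_wignerKernel, smul_zero, zero_add, real_smul,
    ofReal_mul]

end WignerKernel

section Relaxation
open ProbabilityTheory
variable {φ : ℝ → ℝ} {ρ u : ℝ}

/-- The velocity profile `φ` has density `ρ`, mean velocity `u` and temperature `T`. The products
with `ρ` make sense of the last two also where `ρ` vanishes. -/
structure HasMoments (φ : ℝ → ℝ) (ρ u T : ℝ) : Prop where
  density : ρ = ∫ v, φ v
  momentum : ρ * u = ∫ v, v * φ v
  temperature : ρ * T = ∫ v, (v - u) ^ 2 * φ v

/-- The Maxwellian with density `ρ`, mean velocity `u` and temperature `T`, in units where the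
particle mass and the Boltzmann constant are `1`. -/
noncomputable def maxwellian (ρ u T v : ℝ) : ℝ :=
  ρ * (Real.sqrt (2 * Real.pi * T))⁻¹ * Real.exp (-(v - u) ^ 2 / (2 * T))

theorem maxwellian_eq_mul_gaussianPDFReal (ρ u : ℝ) (T : ℝ≥0) :
    maxwellian ρ u T = fun v => ρ * gaussianPDFReal u T v :=
  funext fun _ => mul_assoc _ _ _

theorem integral_mul_maxwellian {T : ℝ≥0} (hT : T ≠ 0) (a : ℝ → ℝ) :
    ∫ v, a v * maxwellian ρ u T v = ρ * ∫ v, a v ∂gaussianReal u T := by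
  rw [integral_gaussianReal_eq_integral_smul hT, ← integral_const_mul,
    maxwellian_eq_mul_gaussianPDFReal]
  congr 1 with v
  rw [smul_eq_mul]
  ring

theorem hasMoments_maxwellian (ρ u : ℝ) {T : ℝ≥0} (hT : T ≠ 0) :
    HasMoments (maxwellian ρ u T) ρ u T where
  density := by simpa using (integral_mul_maxwellian hT fun _ => 1).symm
  momentum := by rw [integral_mul_maxwellian hT, integral_id_gaussianReal]
  temperature := by
    have hvariance := variance_eq_integral (μ := gaussianReal u T) aemeasurable_id
    simp only [id_eq, variance_id_gaussianReal, integral_id_gaussianReal] at hvariance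
    rw [integral_mul_maxwellian hT, ← hvariance]

theorem integrable_weighted_maxwellian (ρ u : ℝ) {T : ℝ≥0} (hT : T ≠ 0) :
    Integrable fun v : ℝ => (1 + v ^ 2) • maxwellian ρ u T v := by
  have hsq : Integrable (fun v : ℝ => v ^ 2) (gaussianReal u T) :=
    (memLp_id_gaussianReal 2).integrable_sq
  have hweight := (integrable_const (1 : ℝ)).add hsq
  rw [gaussianReal_of_var_ne_zero _ hT, integrable_withDensity_iff_integrable_smul'
    (measurable_gaussianPDF u T) (.of_forall fun v => ENNReal.ofReal_lt_top)] at hweight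
  refine (hweight.const_mul ρ).congr (.of_forall fun v => ?_)
  simp only [toReal_gaussianPDF, maxwellian_eq_mul_gaussianPDFReal, Pi.add_apply, smul_eq_mul]
  ring

theorem HasMoments.integral_one_add_sq_smul {T : ℝ} (h : HasMoments φ ρ u T)
    (hφ : Integrable fun v : ℝ => (1 + v ^ 2) • φ v) :
    ∫ v : ℝ, (1 + v ^ 2) • φ v = ρ * (1 + u ^ 2 + T) := by
  have hφ₀ := integrable_of_weighted hφ
  have hφ₁ := integrable_id_smul_of_weighted hφ
  have hexpand (v : ℝ) : (v - u) ^ 2 * φ v =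
      (1 + v ^ 2) • φ v - (2 * u * (v • φ v) + (1 - u ^ 2) * φ v) := by
    simp only [smul_eq_mul]
    ring
  have hrest : Integrable fun v => 2 * u * (v • φ v) + (1 - u ^ 2) * φ v :=
    (hφ₁.const_mul _).add (hφ₀.const_mul _)
  have htemperature := h.temperature
  simp only [hexpand] at htemperature
  rw [integral_sub hφ hrest, integral_add (hφ₁.const_mul _) (hφ₀.const_mul _), integral_const_mul,
    integral_const_mul, ← h.density] at htemperature
  simp only [smul_eq_mul] at htemperature ⊢
  rw [← h.momentum] at htemperature
  linear_combination -htemperature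

theorem weightedNorm_maxwellian_le {T : ℝ≥0} (hT : T ≠ 0) (h : HasMoments φ ρ u T)
    (hφ : Integrable fun v : ℝ => (1 + v ^ 2) • φ v) :
    weightedNorm (maxwellian ρ u T) ≤ weightedNorm φ := by
  have hE := integrable_weighted_maxwellian ρ u hT
  have habs (v : ℝ) : ‖(1 + v ^ 2) • maxwellian ρ u T v‖ =
      ‖ρ‖ * ((1 + v ^ 2) • maxwellian 1 u T v) := by
    have hpdf := gaussianPDFReal_nonneg u T v
    have hweight : 0 ≤ 1 + v ^ 2 := by positivity
    simp only [maxwellian_eq_mul_gaussianPDFReal, smul_eq_mul, norm_mul, one_mul,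
      Real.norm_of_nonneg hpdf, Real.norm_of_nonneg hweight]
    ring
  have hpos : 0 ≤ 1 + u ^ 2 + (T : ℝ) := by positivity
  calc weightedNorm (maxwellian ρ u T)
      = ENNReal.ofReal (∫ v : ℝ, ‖(1 + v ^ 2) • maxwellian ρ u T v‖) :=
        (ofReal_integral_norm_eq_lintegral_enorm hE).symm
    _ = ENNReal.ofReal (‖ρ‖ * (1 * (1 + u ^ 2 + T))) := by
        simp only [habs]
        rw [integral_const_mul, (hasMoments_maxwellian 1 u hT).integral_one_add_sq_smul
          (integrable_weighted_maxwellian 1 u hT)]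
    _ = ‖∫ v : ℝ, (1 + v ^ 2) • φ v‖ₑ := by
        rw [h.integral_one_add_sq_smul hφ, ← ofReal_norm, norm_mul, Real.norm_of_nonneg hpos,
          one_mul]
    _ ≤ weightedNorm φ := enorm_integral_le_lintegral_enorm _

theorem weightedNorm_le_of_relaxation {T ν : ℝ} {C : ℝ≥0} {F : ℝ → ℝ} {θ : ℝ → ℂ} (hT : 0 < T)
    (h : HasMoments φ ρ u T) (hφ : Integrable fun v : ℝ => (1 + v ^ 2) • φ v)
    (hθ : weightedNorm θ ≤ C * weightedNorm φ)
    (hF : ∀ v, (F v : ℂ) + θ v = ((ν * (maxwellian ρ u T v - φ v) : ℝ) : ℂ)) :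
    weightedNorm F ≤ (2 * ‖ν‖₊ + C : ℝ≥0) * weightedNorm φ := by
  lift T to ℝ≥0 using hT.le
  have hT : T ≠ 0 := (NNReal.coe_pos.1 hT).ne'
  have hE := (integrable_of_weighted (integrable_weighted_maxwellian ρ u hT)).aestronglyMeasurable
  have hφm := (integrable_of_weighted hφ).aestronglyMeasurable
  let R : ℝ → ℂ := fun v => ((ν • (maxwellian ρ u T - φ)) v : ℝ)
  have hFR : (fun v => (F v : ℂ)) = R - θ := funext fun v => eq_sub_of_add_eq (hF v)
  calc weightedNorm F
      ≤ weightedNorm (R - θ) := weightedNorm_mono fun v =>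
        ((norm_real (F v)).symm.trans (congrArg norm (congrFun hFR v))).le
    _ ≤ weightedNorm R + weightedNorm θ :=
        weightedNorm_sub_le <|
          continuous_ofReal.comp_aestronglyMeasurable ((hE.sub hφm).const_smul ν)
    _ ≤ ‖ν‖ₑ * (weightedNorm φ + weightedNorm φ) + C * weightedNorm φ := by
        gcongr
        calc weightedNorm R ≤ weightedNorm (ν • (maxwellian ρ u T - φ)) :=
              weightedNorm_mono fun v => (norm_real _).le
          _ ≤ ‖ν‖ₑ * (weightedNorm φ + weightedNorm φ) := by
              rw [weightedNorm_const_smul]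
              gcongr
              exact (weightedNorm_sub_le hE).trans (by
                gcongr
                exact weightedNorm_maxwellian_le hT h hφ)
    _ = (2 * ‖ν‖₊ + C : ℝ≥0) * weightedNorm φ := by
        rw [enorm_eq_nnnorm]
        push_cast
        ring

theorem integral_mul_eq_neg_of_relaxation {T ν m : ℝ} {F : ℝ → ℝ} {θ : ℝ → ℂ} (hT : 0 < T)
    (h : HasMoments φ ρ u T) (hφ : Integrable fun v : ℝ => (1 + v ^ 2) • φ v)
    (hθ : Integrable fun v : ℝ => (1 + v ^ 2) • θ v) (hm : ∫ v : ℝ, v • θ v = (m : ℂ))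
    (hF : ∀ v, (F v : ℂ) + θ v = ((ν * (maxwellian ρ u T v - φ v) : ℝ) : ℂ)) :
    ∫ v, v * F v = -m := by
  lift T to ℝ≥0 using hT.le
  have hT : T ≠ 0 := (NNReal.coe_pos.1 hT).ne'
  have hE₁ := integrable_id_smul_of_weighted (integrable_weighted_maxwellian ρ u hT)
  have hφ₁ := integrable_id_smul_of_weighted hφ
  have hR : Integrable fun v : ℝ => ν * (v • maxwellian ρ u T v - v • φ v) :=
    (hE₁.sub hφ₁).const_mul ν
  have hRc : Integrable fun v : ℝ =>
      ((ν * (v • maxwellian ρ u T v - v • φ v) : ℝ) : ℂ) := hR.ofReal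
  have hR₀ : ∫ v : ℝ, ν * (v • maxwellian ρ u T v - v • φ v) = 0 := by
    rw [integral_const_mul, integral_sub hE₁ hφ₁]
    simp only [smul_eq_mul]
    rw [← (hasMoments_maxwellian ρ u hT).momentum, ← h.momentum, sub_self, mul_zero]
  have hsplit (v : ℝ) : ((v * F v : ℝ) : ℂ) =
      ((ν * (v • maxwellian ρ u T v - v • φ v) : ℝ) : ℂ) - v • θ v := by
    rw [ofReal_mul, eq_sub_of_add_eq (hF v), real_smul]
    simp only [smul_eq_mul]
    push_cast
    ring
  apply ofReal_injective
  rw [← integral_complex_ofReal]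
  simp only [hsplit]
  rw [integral_sub hRc (integrable_id_smul_of_weighted hθ), integral_complex_ofReal, hR₀, hm,
    ofReal_zero, zero_sub, ofReal_neg]

end Relaxation

section FreeFlow
open scoped SchwartzMap LineDeriv

theorem abs_sub_sub_mul_le_of_hasDerivAt {w w' w'' : ℝ → ℝ} {N : ℝ}
    (hw : ∀ s, HasDerivAt w (w' s) s) (hw' : ∀ s, HasDerivAt w' (w'' s) s)
    (hN : ∀ s, |w'' s| ≤ N) (h : ℝ) : |w h - w 0 - h * w' 0| ≤ N * (|h| * |h|) := by
  have hw'_sub (s : ℝ) : |w' s - w' 0| ≤ N * |s| := by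
    simpa using convex_univ.norm_image_sub_le_of_norm_hasDerivWithin_le
      (fun s _ => (hw' s).hasDerivWithinAt) (fun s _ => hN s) (mem_univ 0) (mem_univ s)
  have hremainder := (convex_uIcc 0 h).norm_image_sub_le_of_norm_hasDerivWithin_le
    (f := fun s => w s - s * w' 0) (C := N * |h|)
    (fun s _ => ((hw s).sub ((hasDerivAt_id s).mul_const (w' 0))).hasDerivWithinAt)
    (fun s hs => by
      rw [one_mul]
      have hsh : |s| ≤ |h| := by simpa using abs_sub_left_of_mem_uIcc hs
      exact (hw'_sub s).trans
        (mul_le_mul_of_nonneg_left hsh ((abs_nonneg _).trans (hN 0))))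
    left_mem_uIcc right_mem_uIcc
  simpa [sub_right_comm, mul_assoc] using hremainder

theorem SecondDifferenceBound.of_hasDerivAt {Z : Type*} [TopologicalSpace Z] {Φ : Flow ℝ Z}
    {N : ℝ} {φ φ' φ'' : Z → ℝ} (hφ : ∀ z t, HasDerivAt (fun s => φ (Φ s z)) (φ' (Φ t z)) t)
    (hφ' : ∀ z t, HasDerivAt (fun s => φ' (Φ s z)) (φ'' (Φ t z)) t) (hN : ∀ z, |φ'' z| ≤ N) :
    SecondDifferenceBound Φ N φ := by
  intro z h k
  have htaylor (h : ℝ) : |φ (Φ h z) - φ z - h * φ' z| ≤ N * (|h| * |h|) := by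
    simpa using abs_sub_sub_mul_le_of_hasDerivAt (hφ z) (hφ' z) (fun s => hN (Φ s z)) h
  calc |k * (φ (Φ h z) - φ z) - h * (φ (Φ k z) - φ z)|
      = |k * (φ (Φ h z) - φ z - h * φ' z) - h * (φ (Φ k z) - φ z - k * φ' z)| := by ring_nf
    _ ≤ |k| * (N * (|h| * |h|)) + |h| * (N * (|k| * |k|)) := by
        refine (abs_sub _ _).trans ?_
        rw [abs_mul, abs_mul]
        gcongr
        exacts [htaylor h, htaylor k]
    _ = N * (|h| * |k| * (|h| + |k|)) := by ring

/-- The free motion `(x, v) ↦ (x + t * v, v)` on phase space. -/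
def freeFlow : Flow ℝ (ℝ × ℝ) where
  toFun t z := (z.1 + t * z.2, z.2)
  cont' := by fun_prop
  map_add' s t z := by ext <;> simp; ring
  map_zero' z := by simp

theorem freeFlow_apply (t : ℝ) (z : ℝ × ℝ) : freeFlow t z = (z.1 + t * z.2, z.2) := rfl

theorem measurePreserving_freeFlow (t : ℝ) : MeasurePreserving (freeFlow t) := by
  have hshear := (MeasurePreserving.id (volume : Measure ℝ)).skew_product
    (g := fun v x : ℝ => x + t * v) (by fun_prop)
    (.of_forall fun v => (measurePreserving_add_right volume (t * v)).map_eq)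
  exact (Measure.measurePreserving_swap.comp hshear).comp Measure.measurePreserving_swap

theorem hasTemperateGrowth_velocity : HasTemperateGrowth fun z : ℝ × ℝ => z.2 :=
  (ContinuousLinearMap.snd ℝ ℝ ℝ).hasTemperateGrowth

theorem hasTemperateGrowth_one_add_velocity_sq :
    HasTemperateGrowth fun z : ℝ × ℝ => 1 + z.2 ^ 2 :=
  (HasTemperateGrowth.const 1).add (hasTemperateGrowth_velocity.pow 2)

theorem hasTemperateGrowth_prodMk (x : ℝ) : HasTemperateGrowth fun v : ℝ => (x, v) := by
  have hadd := (HasTemperateGrowth.const (x, (0 : ℝ))).add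
    (ContinuousLinearMap.inr ℝ ℝ ℝ).hasTemperateGrowth
  convert hadd using 2
  simp

/-- The Schwartz function `(x, v) ↦ v * ∂ₓ g (x, v)`, the derivative of `g` along `freeFlow`. -/
noncomputable def advect (g : 𝓢(ℝ × ℝ, ℝ)) : 𝓢(ℝ × ℝ, ℝ) :=
  SchwartzMap.smulLeftCLM ℝ (fun z : ℝ × ℝ => z.2) (∂_{((1 : ℝ), (0 : ℝ))} g)

theorem advect_apply (g : 𝓢(ℝ × ℝ, ℝ)) (z : ℝ × ℝ) :
    advect g z = z.2 * fderiv ℝ g z (1, 0) :=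
  SchwartzMap.smulLeftCLM_apply_apply hasTemperateGrowth_velocity _ _

theorem advect_apply_eq_mul_deriv (g : 𝓢(ℝ × ℝ, ℝ)) (x v : ℝ) :
    advect g (x, v) = v * deriv (fun y => g (y, v)) x := by
  have hderiv : HasDerivAt (fun y => g (y, v)) (fderiv ℝ g (x, v) (1, 0)) x :=
    g.differentiableAt.hasFDerivAt.comp_hasDerivAt x
      ((hasDerivAt_id x).prodMk (hasDerivAt_const x v))
  rw [advect_apply, hderiv.deriv]

theorem hasDerivAt_freeFlow (g : 𝓢(ℝ × ℝ, ℝ)) (z : ℝ × ℝ) (t : ℝ) :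
    HasDerivAt (fun s => g (freeFlow s z)) (advect g (freeFlow t z)) t := by
  have hline : HasDerivAt (fun s => freeFlow s z) (z.2 • (1, 0)) t := by
    refine ((((hasDerivAt_id t).mul_const z.2).const_add z.1).prodMk
      (hasDerivAt_const t z.2)).congr_deriv ?_
    simp
  refine (g.differentiableAt.hasFDerivAt.comp_hasDerivAt t hline).congr_deriv ?_
  rw [advect_apply, map_smul, smul_eq_mul, freeFlow_apply]

theorem exists_secondDifferenceBound_freeFlow (g : 𝓢(ℝ × ℝ, ℝ)) :
    ∃ N : ℕ, SecondDifferenceBound freeFlow N g := by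
  obtain ⟨K, -, hK⟩ := (advect (advect g)).decay 0 0
  obtain ⟨N, hN⟩ := exists_nat_ge K
  refine ⟨N, .of_hasDerivAt (hasDerivAt_freeFlow g) (hasDerivAt_freeFlow (advect g)) fun z => ?_⟩
  exact le_trans (by simpa using hK z) hN

theorem flowDeriv_freeFlow (g : 𝓢(ℝ × ℝ, ℝ)) (z : ℝ × ℝ) :
    flowDeriv freeFlow g z = advect g z := by
  simpa [flowDeriv] using (hasDerivAt_freeFlow g z 0).deriv

/-- The Schwartz function `(x, v) ↦ (1 + v ^ 2) * g (x, v)`. -/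
noncomputable def velocityWeighted (g : 𝓢(ℝ × ℝ, ℝ)) : 𝓢(ℝ × ℝ, ℝ) :=
  SchwartzMap.smulLeftCLM ℝ (fun z : ℝ × ℝ => 1 + z.2 ^ 2) g

theorem velocityWeighted_apply (g : 𝓢(ℝ × ℝ, ℝ)) (z : ℝ × ℝ) :
    velocityWeighted g z = (1 + z.2 ^ 2) * g z :=
  SchwartzMap.smulLeftCLM_apply_apply hasTemperateGrowth_one_add_velocity_sq _ _

theorem advect_velocityWeighted (g : 𝓢(ℝ × ℝ, ℝ)) (z : ℝ × ℝ) :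
    advect (velocityWeighted g) z = (1 + z.2 ^ 2) * advect g z := by
  rw [← flowDeriv_freeFlow, ← flowDeriv_freeFlow, flowDeriv, flowDeriv,
    ← deriv_const_mul_field]
  simp only [velocityWeighted_apply, freeFlow_apply]

theorem integrable_weighted_slice (g : 𝓢(ℝ × ℝ, ℝ)) (x : ℝ) :
    Integrable fun v : ℝ => (1 + v ^ 2) • g (x, v) :=
  integrable_one_add_sq_smul_schwartzMap <|
    SchwartzMap.compCLMOfAntilipschitz ℝ (g := fun v => (x, v)) (K := 1)
      (hasTemperateGrowth_prodMk x)
      (fun v w => by simp [Prod.edist_eq]) g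

end FreeFlow

section FreeTransport
open scoped SchwartzMap
variable {g : ℝ → 𝓢(ℝ × ℝ, ℝ)} {C : ℝ≥0}

/-- The source `∂ₜ g + v * ∂ₓ g` of the free transport equation along a curve `g` of Schwartz
functions. -/
noncomputable def freeSource (g : ℝ → 𝓢(ℝ × ℝ, ℝ)) (t : ℝ) (z : ℝ × ℝ) : ℝ :=
  deriv (fun s => g s z) t + advect (g t) z

theorem eLpNorm_velocityWeighted (g : 𝓢(ℝ × ℝ, ℝ)) :
    eLpNorm (velocityWeighted g) 1 volume = ∫⁻ x, weightedNorm fun v => g (x, v) := by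
  rw [eLpNorm_one_eq_lintegral_enorm, Measure.volume_eq_prod,
    lintegral_prod _ (velocityWeighted g).continuous.enorm.aemeasurable]
  simp only [velocityWeighted_apply, weightedNorm, smul_eq_mul]

theorem eLpNorm_one_add_velocity_sq_mul_le (F : ℝ × ℝ → ℝ) :
    eLpNorm (fun z => (1 + z.2 ^ 2) * F z) 1 volume ≤ ∫⁻ x, weightedNorm fun v => F (x, v) := by
  rw [eLpNorm_one_eq_lintegral_enorm, Measure.volume_eq_prod]
  exact lintegral_prod_le _

theorem transportSolution_velocityWeighted (hdiff : ∀ z, Differentiable ℝ fun t => g t z)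
    (hC : ∀ t x, weightedNorm (fun v => freeSource g t (x, v)) ≤
      C * weightedNorm fun v => g t (x, v)) :
    TransportSolution freeFlow volume C (fun t => velocityWeighted (g t))
      fun t z => (1 + z.2 ^ 2) * freeSource g t z where
  measurePreserving := measurePreserving_freeFlow
  measurable t := (velocityWeighted (g t)).continuous.measurable
  integrable t := (velocityWeighted (g t)).integrable
  differentiable z := by
    simp only [velocityWeighted_apply]
    exact (hdiff z).const_mul _
  differentiableAt_flow t z := (hasDerivAt_freeFlow (velocityWeighted (g t)) z 0).differentiableAt
  source_eq t z := by
    simp only [flowDeriv_freeFlow, advect_velocityWeighted, velocityWeighted_apply,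
      deriv_const_mul_field, freeSource, mul_add]
  exists_secondDifferenceBound t := exists_secondDifferenceBound_freeFlow _
  eLpNorm_source_le t := by
    rw [eLpNorm_velocityWeighted, ← lintegral_const_mul' _ _ ENNReal.coe_ne_top]
    exact (eLpNorm_one_add_velocity_sq_mul_le _).trans (lintegral_mono (hC t))

theorem integral_div_mul_weighted {a h : ℝ × ℝ → ℝ} {K : ℝ} (ha : Measurable a)
    (hK : ∀ z, |a z / (1 + z.2 ^ 2)| ≤ K) (hh : Integrable fun z => (1 + z.2 ^ 2) * h z) :
    ∫ z, a z / (1 + z.2 ^ 2) * ((1 + z.2 ^ 2) * h z) = ∫ x, ∫ v, a (x, v) * h (x, v) := by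
  have hmeas : Measurable fun z => a z / (1 + z.2 ^ 2) := by fun_prop
  have hcancel (z : ℝ × ℝ) : a z / (1 + z.2 ^ 2) * ((1 + z.2 ^ 2) * h z) = a z * h z := by
    rw [← mul_assoc, div_mul_cancel₀ _ (by positivity)]
  have hint := hh.bdd_mul hmeas.aestronglyMeasurable (.of_forall hK)
  simp only [hcancel] at hint ⊢
  exact integral_prod _ hint

theorem hasDerivAt_integral_momentum {W : ℝ → ℝ} {K : ℝ}
    (hdiff : ∀ z, Differentiable ℝ fun t => g t z)
    (hC : ∀ t x, weightedNorm (fun v => freeSource g t (x, v)) ≤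
      C * weightedNorm fun v => g t (x, v))
    (hW : Measurable W) (hK : ∀ x, |W x| ≤ K)
    (hforce : ∀ t x, ∫ v, v * freeSource g t (x, v) = -((∫ v, g t (x, v)) * W x)) (t : ℝ) :
    HasDerivAt (fun s => ∫ x, ∫ v, v * g s (x, v)) (-∫ x, (∫ v, g t (x, v)) * W x) t := by
  have hsol := transportSolution_velocityWeighted hdiff hC
  have hvel (z : ℝ × ℝ) : |z.2 / (1 + z.2 ^ 2)| ≤ 1 :=
    abs_div_one_add_sq_le (by simpa using abs_le_one_add_sq z.2)
  have hWbound (z : ℝ × ℝ) : |W z.1 / (1 + z.2 ^ 2)| ≤ K :=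
    abs_div_one_add_sq_le (by nlinarith [hK z.1, abs_nonneg (W z.1), sq_nonneg z.2])
  have hint (s : ℝ) : Integrable fun z => (1 + z.2 ^ 2) * g s z :=
    (hsol.integrable s).congr (.of_forall (velocityWeighted_apply (g s)))
  have hmomentum (s : ℝ) : ∫ z, z.2 / (1 + z.2 ^ 2) * velocityWeighted (g s) z =
      ∫ x, ∫ v, v * g s (x, v) := by
    simpa only [velocityWeighted_apply] using
      integral_div_mul_weighted measurable_snd hvel (hint s)
  have htotalForce (s : ℝ) : ∫ z, W z.1 / (1 + z.2 ^ 2) * velocityWeighted (g s) z =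
      ∫ x, (∫ v, g s (x, v)) * W x := by
    simpa only [velocityWeighted_apply, mul_comm (W _), integral_mul_const] using
      integral_div_mul_weighted (a := fun z => W z.1) (hW.comp measurable_fst) hWbound (hint s)
  have hsource (s : ℝ) : ∫ z, z.2 / (1 + z.2 ^ 2) * ((1 + z.2 ^ 2) * freeSource g s z) =
      -∫ z, W z.1 / (1 + z.2 ^ 2) * velocityWeighted (g s) z := by
    rw [integral_div_mul_weighted measurable_snd hvel (hsol.integrable_source s), htotalForce,
      ← integral_neg]
    simp only [hforce]
  have hderiv := hsol.hasDerivAt_integral_mul (ψ := fun z => z.2 / (1 + z.2 ^ 2)) (by fun_prop)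
    hvel (fun _ _ => rfl) ?_ t
  · simpa only [hmomentum, hsource, htotalForce] using hderiv
  · simp only [hsource]
    have hWmeas : Measurable fun z : ℝ × ℝ => W z.1 / (1 + z.2 ^ 2) := by fun_prop
    exact (hsol.continuous_integral_mul hWmeas.aestronglyMeasurable hWbound).neg

end FreeTransport

end WignerBGK

open WignerBGK in
theorem wignerBGK_momentum_balance_general (ℏ ν : ℝ) (hℏ : 0 < ℏ) (V : SchwartzMap ℝ ℝ)
    (f ft : ℝ → ℝ → ℝ → ℝ)
    (hfS : ∀ t : ℝ, ∃ g : SchwartzMap (ℝ × ℝ) ℝ, ∀ x v : ℝ, f t x v = g (x, v))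
    (hft : ∀ t x v : ℝ, HasDerivAt (fun s => f s x v) (ft t x v) t)
    (ρ u T : ℝ → ℝ → ℝ)
    (hρ : ∀ t x : ℝ, ρ t x = ∫ v : ℝ, f t x v)
    (hu : ∀ t x : ℝ, ρ t x * u t x = ∫ v : ℝ, v * f t x v)
    (hT : ∀ t x : ℝ, ρ t x * T t x = ∫ v : ℝ, (v - u t x) ^ 2 * f t x v)
    (hTpos : ∀ t x : ℝ, 0 < T t x)
    (feq : ℝ → ℝ → ℝ → ℝ)
    (hfeq : ∀ t x v : ℝ, feq t x v =
      ρ t x * (Real.sqrt (2 * Real.pi * T t x))⁻¹ *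
        Real.exp (-(v - u t x) ^ 2 / (2 * T t x)))
    (hPDE : ∀ t x v : ℝ,
      ((ft t x v : ℝ) : ℂ) + (v : ℂ) * ((deriv (fun y => f t y v) x : ℝ) : ℂ) +
          wignerTheta ℏ (⇑V) (fun w => ((f t x w : ℝ) : ℂ)) x v =
        ((ν * (feq t x v - f t x v) : ℝ) : ℂ)) (t : ℝ) :
    HasDerivAt (fun s => ∫ x : ℝ, ∫ v : ℝ, v * f s x v)
      (-∫ x : ℝ, ρ t x * deriv (⇑V) x) t := by
  choose g hg using hfS
  obtain rfl : f = fun t x v => g t (x, v) := by ext t x v; exact hg t x v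
  have hmoments (t x : ℝ) : HasMoments (fun v => g t (x, v)) (ρ t x) (u t x) (T t x) :=
    ⟨hρ t x, hu t x, hT t x⟩
  have hsource (t x v : ℝ) : (freeSource g t (x, v) : ℂ) +
      wignerTheta ℏ V (fun w => (g t (x, w) : ℂ)) x v =
      ((ν * (maxwellian (ρ t x) (u t x) (T t x) v - g t (x, v)) : ℝ) : ℂ) := by
    rw [freeSource, (hft t x v).deriv, advect_apply_eq_mul_deriv, maxwellian, ← hfeq, ← hPDE,
      ofReal_add, ofReal_mul]
  have hint (t x : ℝ) := integrable_weighted_slice (g t) x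
  obtain ⟨C, hC⟩ := exists_weightedNorm_wignerTheta_le hℏ V
  obtain ⟨K, -, hK⟩ := (SchwartzMap.derivCLM ℝ ℝ V).decay 0 0
  simp only [hρ]
  refine hasDerivAt_integral_momentum (fun z t => (hft t z.1 z.2).differentiableAt)
    (fun t x => weightedNorm_le_of_relaxation (hTpos t x) (hmoments t x) (hint t x)
      (hC _ x (hint t x)) (hsource t x))
    (measurable_deriv V) (fun x => by simpa using hK x) (fun t x => ?_) t
  exact integral_mul_eq_neg_of_relaxation (hTpos t x) (hmoments t x) (hint t x)
    (integrable_weighted_wignerTheta hℏ V (hint t x) x)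
    (integral_id_smul_wignerTheta hℏ V (hint t x) x) (hsource t x)

/-- Momentum balance for the 1D Wigner–BGK equation: along a continuously differentiable
curve `t ↦ f(t)` of Schwartz functions of `(x,v)` solving
`∂f/∂t + v ∂f/∂x + Θ[V]f = (f_eq - f)/τ`, one has
`d/dt ∫∫ v f dx dv = -∫ ρ V' dx`. -/
theorem wignerBGK_momentum_balance (ℏ τ : ℝ) (hℏ : 0 < ℏ) (hτ : 0 < τ)
    (V : SchwartzMap ℝ ℝ)
    (f ft : ℝ → ℝ → ℝ → ℝ)
    (hfS : ∀ t : ℝ, ∃ g : SchwartzMap (ℝ × ℝ) ℝ, ∀ x v : ℝ, f t x v = g (x, v))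
    (hftS : ∀ t : ℝ, ∃ g : SchwartzMap (ℝ × ℝ) ℝ, ∀ x v : ℝ, ft t x v = g (x, v))
    (hft : ∀ t x v : ℝ, HasDerivAt (fun s => f s x v) (ft t x v) t)
    (hftc : ∀ x v : ℝ, Continuous fun t => ft t x v)
    (ρ u T : ℝ → ℝ → ℝ)
    (hρ : ∀ t x : ℝ, ρ t x = ∫ v : ℝ, f t x v)
    (hρpos : ∀ t x : ℝ, 0 < ρ t x)
    (hu : ∀ t x : ℝ, ρ t x * u t x = ∫ v : ℝ, v * f t x v)
    (hT : ∀ t x : ℝ, ρ t x * T t x = ∫ v : ℝ, (v - u t x) ^ 2 * f t x v)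
    (hTpos : ∀ t x : ℝ, 0 < T t x)
    (feq : ℝ → ℝ → ℝ → ℝ)
    (hfeq : ∀ t x v : ℝ, feq t x v =
      ρ t x * (Real.sqrt (2 * Real.pi * T t x))⁻¹ *
        Real.exp (-(v - u t x) ^ 2 / (2 * T t x)))
    (hPDE : ∀ t x v : ℝ,
      ((ft t x v : ℝ) : ℂ) + (v : ℂ) * ((deriv (fun y => f t y v) x : ℝ) : ℂ) +
          wignerTheta ℏ (⇑V) (fun w => ((f t x w : ℝ) : ℂ)) x v =
        (((feq t x v - f t x v) / τ : ℝ) : ℂ)) :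
    ∀ t : ℝ, HasDerivAt (fun s => ∫ x : ℝ, ∫ v : ℝ, v * f s x v)
      (-∫ x : ℝ, ρ t x * deriv (⇑V) x) t := by
  simp only [div_eq_inv_mul _ τ] at hPDE
  exact wignerBGK_momentum_balance_general ℏ τ⁻¹ hℏ V f ft hfS hft ρ u T hρ hu hT hTpos feq
    hfeq hPDE
end
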